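/- arXiv:1710.02893 — 3 statements merged into one kernel-verified Lean document; each statement's English description precedes it below -/
import Mathlib

section
/- Let f be a germ of holomorphic function at 0 ∈ ℂⁿ with f ≠ 0 and f(0) = 0, and suppose f is not a power in the ring of holomorphic germs, i.e., there is no germ of holomorphic function g at 0 and integer k ≥ 2 with f = g^k. Then Re(f) and Im(f) are irreducible in the ring of germs at 0 ∈ ℂⁿ of real-valued real-analytic functions: whenever Re(f) = g·h (respectively Im(f) = g·h) with g, h germs of real-valued real-analytic functions at 0, then g(0) ≠ 0 or h(0) ≠ 0. -/
open Filter Topology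

/-!
Suppose `Re f = g * h` with `g 0 = h 0 = 0`. Polarizing, i.e. replacing `conj z` by an independent
variable `w`, turns this into the holomorphic identity
`f z + conj (f (conj w)) = 2 G (z, w) H (z, w)`. On a complex line in the `w`-space where the
second summand does not vanish identically that summand is `s ^ m` in a suitable coordinate `s`, so
`f z + s ^ m = 2 G H` near `(0, 0)`.

Taking the norm of each factor for the covering `(z, s) ↦ (z, s ^ m)` gives
`A * B = (f z + t) ^ m`, and after the change of variable `t ↦ t - f z` the product is `t ^ m`. As
`t` is prime, each factor is a power of `t` times a unit; back at `s = 0` this reads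
`G (z, 0) ^ m = f z ^ d * unit` up to a constant, where `0 < d < m` because `G` and `H` both vanish
at the origin. Dividing `d` and `m` by their greatest common divisor `e` and applying Bézout
exhibits `f` as an `m / e`-th power in the fraction field. This root is locally bounded, hence
holomorphic by Riemann's extension theorem, which is obtained here in any dimension by averaging
over circles transverse to the zero set.
-/

section Taylor

open scoped Nat

variable {𝕜 E F : Type*} [RCLike 𝕜] [NormedAddCommGroup E] [NormedSpace 𝕜 E]
  [NormedAddCommGroup F] [NormedSpace 𝕜 F]

variable (𝕜) in
/-- The Taylor series of `A` at `x` with the symmetric coefficients `D^k A (x) / k!`. Unlike an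
arbitrary power series representing `A`, it depends canonically on `x`. -/
noncomputable def taylorSeries (A : E → F) (x : E) : FormalMultilinearSeries 𝕜 E F :=
  fun k => (k ! : 𝕜)⁻¹ • iteratedFDeriv 𝕜 k A x

variable (𝕜) in
/-- The Taylor series of `A` at all points of `S` converge to `A` on balls of the same radius `ρ`,
with the same bound `C` in the Cauchy estimates of their coefficients. -/
def HasUniformTaylorExpansionOn (A : E → F) (S : Set E) (ρ C : ℝ) : Prop :=
  ∀ x ∈ S, (∀ k, ‖taylorSeries 𝕜 A x k‖ * ρ ^ k ≤ C) ∧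
    ∀ z : E, ‖z‖ < ρ → HasSum (fun k => taylorSeries 𝕜 A x k fun _ => z) (A (x + z))

theorem HasUniformTaylorExpansionOn.mono {A : E → F} {S T : Set E} {ρ σ C D : ℝ}
    (h : HasUniformTaylorExpansionOn 𝕜 A S ρ C) (hTS : T ⊆ S) (hσ : 0 ≤ σ) (hσρ : σ ≤ ρ)
    (hCD : C ≤ D) : HasUniformTaylorExpansionOn 𝕜 A T σ D := by
  refine fun x hx => ⟨fun k => ?_, fun z hz => (h x (hTS hx)).2 z (hz.trans_le hσρ)⟩
  calc ‖taylorSeries 𝕜 A x k‖ * σ ^ k ≤ ‖taylorSeries 𝕜 A x k‖ * ρ ^ k := by gcongr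
    _ ≤ D := ((h x (hTS hx)).1 k).trans hCD

theorem HasUniformTaylorExpansionOn.union {A : E → F} {S T : Set E} {ρ C : ℝ}
    (hS : HasUniformTaylorExpansionOn 𝕜 A S ρ C) (hT : HasUniformTaylorExpansionOn 𝕜 A T ρ C) :
    HasUniformTaylorExpansionOn 𝕜 A (S ∪ T) ρ C :=
  fun x hx => hx.elim (hS x) (hT x)

theorem norm_taylorSeries_apply_le {A : E → F} {S : Set E} {x : E} {ρ C : ℝ}
    (h : HasUniformTaylorExpansionOn 𝕜 A S ρ C) (hρ : 0 < ρ) (hx : x ∈ S) (k : ℕ) (z : E) :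
    ‖taylorSeries 𝕜 A x k fun _ => z‖ ≤ C * (‖z‖ / ρ) ^ k :=
  calc ‖taylorSeries 𝕜 A x k fun _ => z‖ ≤ ‖taylorSeries 𝕜 A x k‖ * ‖z‖ ^ k := by
        simpa using (taylorSeries 𝕜 A x k).le_opNorm fun _ => z
    _ ≤ C / ρ ^ k * ‖z‖ ^ k := by
        gcongr
        exact (le_div_iff₀ (by positivity)).2 ((h x hx).1 k)
    _ = C * (‖z‖ / ρ) ^ k := by ring

theorem exists_forall_norm_changeOrigin_mul_pow_le (p : FormalMultilinearSeries 𝕜 E F)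
    {r s : NNReal} (hrs : (r + s : ENNReal) < p.radius) :
    ∃ C : NNReal, ∀ y : E, ‖y‖₊ ≤ r → ∀ k, ‖p.changeOrigin y k‖₊ * s ^ k ≤ C := by
  have hr : (r : ENNReal) < p.radius := lt_of_le_of_lt le_self_add hrs
  let b (k : ℕ) (i : Σ l : ℕ, { t : Finset (Fin (k + l)) // t.card = l }) : NNReal :=
    ‖p (k + i.1)‖₊ * r ^ i.1
  have hb : Summable fun k => ∑' i, b k i * s ^ k :=
    (NNReal.summable_sigma.1 (p.changeOriginSeries_summable_aux₁ hrs)).2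
  refine ⟨∑' k, ∑' i, b k i * s ^ k, fun y hy k => ?_⟩
  have hyr : (‖y‖₊ : ENNReal) < p.radius := lt_of_le_of_lt (by exact_mod_cast hy) hr
  calc ‖p.changeOrigin y k‖₊ * s ^ k ≤ (∑' i, b k i) * s ^ k := by
        refine mul_le_mul_left ?_ _
        refine (p.nnnorm_changeOrigin_le k hyr).trans ?_
        refine Summable.tsum_le_tsum (fun i => ?_) (p.changeOriginSeries_summable_aux₂ hyr k)
          (p.changeOriginSeries_summable_aux₂ hr k)
        exact mul_le_mul_right (pow_le_pow_left' hy _) _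
    _ = ∑' i, b k i * s ^ k := NNReal.tsum_mul_right _ _ |>.symm
    _ ≤ _ := hb.le_tsum k fun _ _ => zero_le

variable [CompleteSpace F]

theorem norm_taylorSeries_le {A : E → F} {p : FormalMultilinearSeries 𝕜 E F} {x : E}
    {r : ENNReal} (h : HasFPowerSeriesOnBall A p x r) (k : ℕ) :
    ‖taylorSeries 𝕜 A x k‖ ≤ ‖p k‖ := by
  refine ContinuousMultilinearMap.opNorm_le_bound (norm_nonneg _) fun v => ?_
  rw [taylorSeries, _root_.smul_apply, h.iteratedFDeriv_eq_sum_of_completeSpace, norm_smul,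
    norm_inv, RCLike.norm_natCast, inv_mul_le_iff₀ (by positivity)]
  calc ‖∑ σ : Equiv.Perm (Fin k), p k fun i => v (σ i)‖
      ≤ ∑ _σ : Equiv.Perm (Fin k), ‖p k‖ * ∏ i, ‖v i‖ := by
        refine norm_sum_le_of_le _ fun σ _ => ?_
        rw [← Equiv.prod_comp σ fun i => ‖v i‖]
        exact (p k).le_opNorm _
    _ = k ! * (‖p k‖ * ∏ i, ‖v i‖) := by
        rw [Finset.sum_const, Finset.card_univ, Fintype.card_perm, Fintype.card_fin, nsmul_eq_mul]

theorem exists_hasUniformTaylorExpansionOn_nhds {A : E → F} {x : E} (hA : AnalyticAt 𝕜 A x) :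
    ∃ S ∈ 𝓝 x, ∃ ρ C : ℝ, 0 < ρ ∧ HasUniformTaylorExpansionOn 𝕜 A S ρ C := by
  obtain ⟨p, r, hp⟩ := hA
  obtain ⟨R, hR0, hRr⟩ := ENNReal.lt_iff_exists_nnreal_btwn.1 hp.r_pos
  obtain ⟨ρ, rfl⟩ : ∃ ρ, R = ρ + ρ := ⟨R / 2, (add_halves R).symm⟩
  have hρ : 0 < ρ := by simpa using hR0
  push_cast at hRr
  obtain ⟨C, hC⟩ := exists_forall_norm_changeOrigin_mul_pow_le p (hRr.trans_le hp.r_le)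
  refine ⟨Metric.ball x ρ, Metric.ball_mem_nhds x (by exact_mod_cast hρ), ρ, C,
    by exact_mod_cast hρ, fun x' hx' => ?_⟩
  obtain ⟨y, rfl⟩ : ∃ y, x' = x + y := ⟨x' - x, by abel⟩
  have hy : ‖y‖₊ < ρ := by
    rw [mem_ball_iff_norm, add_sub_cancel_left] at hx'
    exact_mod_cast hx'
  have hyr : (‖y‖₊ : ENNReal) < r :=
    lt_of_lt_of_le (by exact_mod_cast hy) (le_self_add.trans hRr.le)
  have hexp := hp.changeOrigin hyr
  refine ⟨fun k => ?_, fun z hz => ?_⟩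
  · calc ‖taylorSeries 𝕜 A (x + y) k‖ * (ρ : ℝ) ^ k ≤ ‖p.changeOrigin y k‖ * (ρ : ℝ) ^ k := by
          gcongr
          exact norm_taylorSeries_le hexp k
      _ ≤ C := by exact_mod_cast hC y hy.le k
  · have hz' : ‖z‖₊ < ρ := by exact_mod_cast hz
    have hmem : z ∈ Metric.eball (0 : E) (r - ‖y‖₊) := by
      rw [Metric.mem_eball, edist_zero_right, lt_tsub_iff_right, enorm_eq_nnnorm]
      exact lt_trans (by exact_mod_cast add_lt_add hz' hy) hRr
    simpa [taylorSeries] using hexp.hasSum_iteratedFDeriv hmem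

theorem exists_hasUniformTaylorExpansionOn_of_isCompact {A : E → F} {S : Set E}
    (hS : IsCompact S) (hA : ∀ x ∈ S, AnalyticAt 𝕜 A x) :
    ∃ ρ C : ℝ, 0 < ρ ∧ HasUniformTaylorExpansionOn 𝕜 A S ρ C := by
  refine hS.induction_on (p := fun T => ∃ ρ C : ℝ, 0 < ρ ∧ HasUniformTaylorExpansionOn 𝕜 A T ρ C)
    ⟨1, 0, one_pos, fun x hx => hx.elim⟩ ?_ ?_ fun x hx => ?_
  · rintro T T' hT ⟨ρ, C, hρ, h⟩
    exact ⟨ρ, C, hρ, h.mono hT hρ.le le_rfl le_rfl⟩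
  · rintro T T' ⟨ρ, C, hρ, h⟩ ⟨ρ', C', hρ', h'⟩
    have hmin : 0 < min ρ ρ' := lt_min hρ hρ'
    exact ⟨min ρ ρ', max C C', hmin,
      (h.mono subset_rfl hmin.le (min_le_left _ _) (le_max_left _ _)).union
        (h'.mono subset_rfl hmin.le (min_le_right _ _) (le_max_right _ _))⟩
  · obtain ⟨T, hT, ρ, C, h⟩ := exists_hasUniformTaylorExpansionOn_nhds (hA x hx)
    exact ⟨T, mem_nhdsWithin_of_mem_nhds hT, ρ, C, h⟩

theorem continuousAt_taylorSeries {A : E → F} {x : E} (hA : AnalyticAt 𝕜 A x) (k : ℕ) :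
    ContinuousAt (fun y => taylorSeries 𝕜 A y k) x := by
  obtain ⟨s, hs, hAs⟩ := hA.exists_mem_nhds_analyticOnNhd
  exact ContinuousAt.const_smul (hAs.iteratedFDeriv k x (mem_of_mem_nhds hs)).continuousAt
    (k ! : 𝕜)⁻¹

end Taylor

section ParametricIntegral

open MeasureTheory Set

variable {E F : Type*} [NormedAddCommGroup E] [NormedSpace ℂ E] [NormedAddCommGroup F]
  [NormedSpace ℂ F] {A : E → F} {γ : ℝ → E} {a b ρ C : ℝ}

theorem le_radius_integral_taylorSeries
    (h : HasUniformTaylorExpansionOn ℂ A (γ '' uIcc a b) ρ C) (hρ : 0 < ρ) :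
    ENNReal.ofReal ρ ≤ FormalMultilinearSeries.radius
      (fun k => ∫ θ in a..b, taylorSeries ℂ A (γ θ) k) := by
  refine FormalMultilinearSeries.le_radius_of_bound _ (C * |b - a|) fun k => ?_
  rw [Real.coe_toNNReal _ hρ.le]
  have hbound : ‖∫ θ in a..b, taylorSeries ℂ A (γ θ) k‖ ≤ C / ρ ^ k * |b - a| :=
    intervalIntegral.norm_integral_le_of_norm_le_const fun θ hθ =>
      (le_div_iff₀ (by positivity)).2 ((h _ (mem_image_of_mem γ (uIoc_subset_uIcc hθ))).1 k)
  calc ‖∫ θ in a..b, taylorSeries ℂ A (γ θ) k‖ * ρ ^ k ≤ C / ρ ^ k * |b - a| * ρ ^ k := by gcongr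
    _ = C * |b - a| := by field_simp

theorem hasSum_integral_taylorSeries [CompleteSpace F]
    (h : HasUniformTaylorExpansionOn ℂ A (γ '' uIcc a b) ρ C) (hρ : 0 < ρ)
    (hint : ∀ k, IntervalIntegrable (fun θ => taylorSeries ℂ A (γ θ) k) volume a b) {z : E}
    (hz : ‖z‖ < ρ) :
    HasSum (fun k => (∫ θ in a..b, taylorSeries ℂ A (γ θ) k) fun _ => z)
      (∫ θ in a..b, A (γ θ + z)) := by
  have hmem {θ : ℝ} (hθ : θ ∈ uIoc a b) : γ θ ∈ γ '' uIcc a b :=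
    mem_image_of_mem γ (uIoc_subset_uIcc hθ)
  have hgeom : Summable fun k : ℕ => C * (‖z‖ / ρ) ^ k :=
    (summable_geometric_of_lt_one (by positivity) ((div_lt_one hρ).2 hz)).mul_left C
  let eval (k : ℕ) := ContinuousMultilinearMap.apply ℂ (fun _ : Fin k => E) F fun _ => z
  have heval (k : ℕ) : ((∫ θ in a..b, taylorSeries ℂ A (γ θ) k) fun _ => z) =
      ∫ θ in a..b, taylorSeries ℂ A (γ θ) k fun _ => z :=
    ((eval k).intervalIntegral_comp_comm (hint k)).symm
  simp only [heval]
  refine intervalIntegral.hasSum_integral_of_dominated_convergence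
    (fun k _ => C * (‖z‖ / ρ) ^ k) (fun k => ?_)
    (fun k => Eventually.of_forall fun θ hθ => norm_taylorSeries_apply_le h hρ (hmem hθ) k z)
    (Eventually.of_forall fun θ _ => hgeom) intervalIntegrable_const
    (Eventually.of_forall fun θ hθ => (h _ (hmem hθ)).2 z hz)
  exact (eval k).continuous.comp_aestronglyMeasurable (hint k).aestronglyMeasurable_restrict_uIoc

theorem analyticAt_intervalIntegral_add [CompleteSpace F] {x : E} (hγ : ContinuousOn γ (uIcc a b))
    (hA : ∀ θ ∈ uIcc a b, AnalyticAt ℂ A (γ θ + x)) :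
    AnalyticAt ℂ (fun z => ∫ θ in a..b, A (γ θ + z)) x := by
  have hγx : ContinuousOn (fun θ => γ θ + x) (uIcc a b) := hγ.add continuousOn_const
  obtain ⟨ρ, C, hρ, h⟩ := exists_hasUniformTaylorExpansionOn_of_isCompact
    (isCompact_uIcc.image_of_continuousOn hγx) (forall_mem_image.2 hA)
  have hint (k : ℕ) : IntervalIntegrable (fun θ => taylorSeries ℂ A (γ θ + x) k) volume a b :=
    ContinuousOn.intervalIntegrable fun θ hθ =>
      ContinuousAt.comp_continuousWithinAt (g := fun y => taylorSeries ℂ A y k)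
        (f := fun θ => γ θ + x) (continuousAt_taylorSeries (hA θ hθ) k) (hγx θ hθ)
  refine ⟨_, ENNReal.ofReal ρ, le_radius_integral_taylorSeries h hρ, by simpa using hρ,
    fun {z} hz => ?_⟩
  have hz' : ‖z‖ < ρ := by
    simpa [Metric.mem_eball, edist_zero_right, ENNReal.lt_ofReal_iff_toReal_lt] using hz
  simpa only [add_assoc] using hasSum_integral_taylorSeries h hρ hint hz'

end ParametricIntegral

section RiemannExtension

open Metric Set Real

variable {E F : Type*} [NormedAddCommGroup E] [NormedSpace ℂ E] [NormedAddCommGroup F]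
  [NormedSpace ℂ F] {A : E → F} {D : E → ℂ} {x : E}

theorem analyticAt_comp_smul_const_add {v : E} {t : ℂ} (hA : AnalyticAt ℂ A (t • v + x)) :
    AnalyticAt ℂ (fun s : ℂ => A (s • v + x)) t :=
  AnalyticAt.comp (f := fun s : ℂ => s • v + x) hA
    (((ContinuousLinearMap.toSpanSingleton ℂ v).analyticAt t).add analyticAt_const)

theorem exists_eventually_ne_zero_on_line (hD : AnalyticAt ℂ D x) (hD0 : ∃ᶠ z in 𝓝 x, D z ≠ 0) :
    ∃ v : E, ∀ᶠ t in 𝓝[≠] (0 : ℂ), D (t • v + x) ≠ 0 := by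
  obtain ⟨r, hr, hDr⟩ := hD.exists_ball_analyticOnNhd
  obtain ⟨z, hz, hzr⟩ := (hD0.and_eventually (ball_mem_nhds x hr)).exists
  let ℓ : ℂ → E := fun t => t • (z - x) + x
  have hℓ0 : ℓ 0 = x := by simp [ℓ]
  have hℓ1 : ℓ 1 = z := by simp [ℓ]
  have hconn : IsPreconnected (ℓ ⁻¹' ball x r) :=
    (((convex_ball x r).translate_preimage_left x).linear_preimage
      ((LinearMap.toSpanSingleton ℂ E (z - x)).restrictScalars ℝ)).isPreconnected
  have han : AnalyticOnNhd ℂ (fun t => D (ℓ t)) (ℓ ⁻¹' ball x r) := fun t ht =>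
    analyticAt_comp_smul_const_add (hDr _ ht)
  refine ⟨z - x, ((han 0 ?_).eventually_eq_zero_or_eventually_ne_zero).resolve_left fun h0 => ?_⟩
  · simpa [hℓ0] using hr
  · refine hz ?_
    simpa [hℓ1] using han.eqOn_zero_of_preconnected_of_eventuallyEq_zero hconn
      (by simpa [hℓ0] using hr) h0 (show ℓ 1 ∈ ball x r from hℓ1 ▸ hzr)

theorem exists_eventually_forall_circle (hD : AnalyticAt ℂ D x) (hD0 : ∃ᶠ z in 𝓝 x, D z ≠ 0)
    {P : E → Prop} (hP : ∀ᶠ z in 𝓝 x, P z) :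
    ∃ (v : E) (r R : ℝ), 0 < r ∧ r < R ∧ ∀ᶠ z in 𝓝 x,
      (∀ t ∈ closedBall (0 : ℂ) R, P (t • v + z)) ∧ ∀ t ∈ sphere (0 : ℂ) r, D (t • v + z) ≠ 0 := by
  obtain ⟨v, hv⟩ := exists_eventually_ne_zero_on_line hD hD0
  have hline : Tendsto (fun t : ℂ => t • v + x) (𝓝 0) (𝓝 x) :=
    Continuous.tendsto' (by fun_prop) _ _ (by simp)
  have hnear := hline.eventually (hP.eventually_nhds.and hD.eventually_analyticAt)
  obtain ⟨ε, hε, hball⟩ :=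
    Metric.eventually_nhds_iff_ball.1 (hnear.and (eventually_nhdsWithin_iff.1 hv))
  have hshift (t : ℂ) :
      Tendsto (fun y : E × ℂ => y.2 • v + y.1) (𝓝 (x, t)) (𝓝 (t • v + x)) :=
    Continuous.tendsto (by fun_prop) _
  refine ⟨v, ε / 4, ε / 2, by linarith, by linarith, .and ?_ ?_⟩
  · refine (isCompact_closedBall 0 _).eventually_forall_of_forall_eventually fun t ht => ?_
    exact (hshift t).eventually (hball t (closedBall_subset_ball (by linarith) ht)).1.1
  · refine (isCompact_sphere 0 _).eventually_forall_of_forall_eventually fun t ht => ?_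
    have ht' := hball t (sphere_subset_ball (by linarith) ht)
    have hDt : D (t • v + x) ≠ 0 := ht'.2 (ne_of_mem_sphere ht (by linarith))
    exact (hshift t).eventually (ht'.1.2.continuousAt.eventually_ne hDt)

variable [CompleteSpace F]

theorem exists_differentiableOn_eqOn_of_mem_codiscreteWithin {B : ℂ → F} {O S : Set ℂ} {C : ℝ}
    (hO : IsOpen O) (hS : S ∈ codiscreteWithin O) (hB : ∀ t ∈ O ∩ S, DifferentiableAt ℂ B t)
    (hC : ∀ t ∈ O ∩ S, ‖B t‖ ≤ C) :
    ∃ B' : ℂ → F, DifferentiableOn ℂ B' O ∧ EqOn B' B S := by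
  classical
  let B' : ℂ → F := fun t => if t ∈ S then B t else limUnder (𝓝[≠] t) B
  refine ⟨B', fun t₀ ht₀ => DifferentiableAt.differentiableWithinAt ?_, fun t ht => if_pos ht⟩
  have hN : {t | t ∈ O ∧ (t ≠ t₀ → t ∈ S)} ∈ 𝓝 t₀ := by
    have hpunctured : ∀ᶠ t in 𝓝[≠] t₀, t ∉ O \ S :=
      disjoint_principal_right.1 (mem_codiscreteWithin.1 hS t₀ ht₀)
    filter_upwards [hO.mem_nhds ht₀, eventually_nhdsWithin_iff.1 hpunctured] with t htO ht
    exact ⟨htO, fun hne => by_contra fun htS => ht hne ⟨htO, htS⟩⟩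
  have hB' : B' =ᶠ[𝓝 t₀] Function.update B t₀ (B' t₀) := by
    filter_upwards [hN] with t ht
    rcases eq_or_ne t t₀ with rfl | hne
    · rw [Function.update_self]
    · rw [Function.update_of_ne hne]
      exact if_pos (ht.2 hne)
  by_cases htS : t₀ ∈ S
  · rw [show B' t₀ = B t₀ from if_pos htS, Function.update_eq_self] at hB'
    exact (hB t₀ ⟨ht₀, htS⟩).congr_of_eventuallyEq hB'
  · rw [show B' t₀ = limUnder (𝓝[≠] t₀) B from if_neg htS] at hB'
    have hmem {t : ℂ} (ht : t ∈ {t | t ∈ O ∧ (t ≠ t₀ → t ∈ S)} \ {t₀}) : t ∈ O ∩ S :=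
      ⟨ht.1.1, ht.1.2 ht.2⟩
    refine ((Complex.differentiableOn_update_limUnder_of_bddAbove hN
      (fun t ht => (hB t (hmem ht)).differentiableWithinAt) ⟨C, ?_⟩).differentiableAt
        hN).congr_of_eventuallyEq hB'
    rintro _ ⟨t, ht, rfl⟩
    exact hC t (hmem ht)

theorem circleAverage_of_mem_codiscreteWithin {B : ℂ → F} {O S : Set ℂ} {c : ℂ} {r C : ℝ}
    (hO : IsOpen O) (hS : S ∈ codiscreteWithin O) (hB : ∀ t ∈ O ∩ S, DifferentiableAt ℂ B t)
    (hC : ∀ t ∈ O ∩ S, ‖B t‖ ≤ C) (hball : closedBall c |r| ⊆ O) (hsphere : sphere c |r| ⊆ S)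
    (hc : c ∈ S) : circleAverage B c r = B c := by
  obtain ⟨B', hB', hBB'⟩ := exists_differentiableOn_eqOn_of_mem_codiscreteWithin hO hS hB hC
  calc circleAverage B c r = circleAverage B' c r :=
        circleAverage_congr_sphere fun t ht => (hBB' (hsphere ht)).symm
    _ = B' c := ((hB'.mono hball).mono closure_ball_subset_closedBall).diffContOnCl.circleAverage
    _ = B c := hBB' hc

theorem exists_analyticAt_extension (hD : AnalyticAt ℂ D x) (hD0 : ∃ᶠ z in 𝓝 x, D z ≠ 0) {C : ℝ}
    (hA : ∀ᶠ z in 𝓝 x, D z ≠ 0 → AnalyticAt ℂ A z) (hC : ∀ᶠ z in 𝓝 x, D z ≠ 0 → ‖A z‖ ≤ C) :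
    ∃ A' : E → F, AnalyticAt ℂ A' x ∧ ∀ᶠ z in 𝓝 x, D z ≠ 0 → A' z = A z := by
  obtain ⟨v, r, R, hr, hrR, hcircle⟩ :=
    exists_eventually_forall_circle hD hD0 (hD.eventually_analyticAt.and (hA.and hC))
  have hr' : |r| = r := abs_of_pos hr
  refine ⟨fun z => circleAverage (fun t => A (t • v + z)) 0 r, ?_, ?_⟩
  · refine AnalyticAt.const_smul (analyticAt_intervalIntegral_add
      (γ := fun θ => circleMap 0 r θ • v) (by fun_prop) fun θ _ => ?_)
    have hθ : circleMap 0 r θ ∈ sphere (0 : ℂ) r := circleMap_mem_sphere 0 hr.le θ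
    obtain ⟨hdisc, hne⟩ := hcircle.self_of_nhds
    exact (hdisc _ (sphere_subset_closedBall.trans (closedBall_subset_closedBall hrR.le) hθ)).2.1
      (hne _ hθ)
  · filter_upwards [hcircle] with z ⟨hdisc, hne⟩ hDz
    have hdisc' {t : ℂ} (ht : t ∈ ball 0 R) := hdisc t (ball_subset_closedBall ht)
    have hDline : AnalyticOnNhd ℂ (fun t : ℂ => D (t • v + z)) (ball 0 R) := fun t ht =>
      analyticAt_comp_smul_const_add (hdisc' ht).1
    have hcodisc := hDline.preimage_zero_mem_codiscreteWithin (x := 0) (by simpa using hDz)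
      (mem_ball_self (hr.trans hrR)) (isConnected_ball (hr.trans hrR))
    have hmean := circleAverage_of_mem_codiscreteWithin (B := fun t => A (t • v + z)) (r := r)
      isOpen_ball hcodisc
      (fun t ht => (analyticAt_comp_smul_const_add ((hdisc' ht.1).2.1 ht.2)).differentiableAt)
      (fun t ht => (hdisc' ht.1).2.2 ht.2) (closedBall_subset_ball (by rwa [hr']))
      (by rwa [hr']) (by simpa using hDz)
    simpa using hmean

end RiemannExtension

section GermAlgebra

variable {E F : Type*} [NormedAddCommGroup E] [NormedSpace ℂ E] [NormedAddCommGroup F]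
  [NormedSpace ℂ F] [CompleteSpace F] {x : E}

theorem eventually_eq_zero_of_smul_eq_zero {D : E → ℂ} {A : E → F} (hD : AnalyticAt ℂ D x)
    (hA : AnalyticAt ℂ A x) (hD0 : ∃ᶠ z in 𝓝 x, D z ≠ 0) (h : ∀ᶠ z in 𝓝 x, D z • A z = 0) :
    ∀ᶠ z in 𝓝 x, A z = 0 := by
  obtain ⟨r, hr, hball⟩ := Metric.eventually_nhds_iff_ball.1
    ((hD.eventually_analyticAt.and hA.eventually_analyticAt).and h)
  obtain ⟨y, hDy, hyr⟩ := (hD0.and_eventually (Metric.ball_mem_nhds x hr)).exists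
  have hAy : ∀ᶠ z in 𝓝 y, A z = 0 := by
    filter_upwards [(hball y hyr).1.1.continuousAt.eventually_ne hDy,
      Metric.isOpen_ball.mem_nhds hyr] with z hDz hzr
    exact (smul_eq_zero.1 (hball z hzr).2).resolve_left hDz
  have hA0 := AnalyticOnNhd.eqOn_zero_of_preconnected_of_eventuallyEq_zero (f := A)
    (fun z hz => (hball z hz).1.2) (convex_ball x r).isPreconnected hyr hAy
  filter_upwards [Metric.ball_mem_nhds x hr] with z hz using hA0 hz

theorem eventually_eq_of_forall_ne_zero {D : E → ℂ} {A B : E → F} (hD : AnalyticAt ℂ D x)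
    (hA : AnalyticAt ℂ A x) (hB : AnalyticAt ℂ B x) (hD0 : ∃ᶠ z in 𝓝 x, D z ≠ 0)
    (h : ∀ᶠ z in 𝓝 x, D z ≠ 0 → A z = B z) : ∀ᶠ z in 𝓝 x, A z = B z := by
  have hsub : ∀ᶠ z in 𝓝 x, D z • (A - B) z = 0 := by
    filter_upwards [h] with z hz
    by_cases hDz : D z = 0
    · rw [hDz, zero_smul]
    · rw [Pi.sub_apply, hz hDz, sub_self, smul_zero]
  filter_upwards [eventually_eq_zero_of_smul_eq_zero hD (hA.sub hB) hD0 hsub] with z hz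
  exact sub_eq_zero.1 hz

theorem exists_eventually_eq_zero_of_prod_eq_zero {ι : Type*} {s : Finset ι} {A : ι → E → ℂ}
    (hA : ∀ i ∈ s, AnalyticAt ℂ (A i) x) (h : ∀ᶠ z in 𝓝 x, ∏ i ∈ s, A i z = 0) :
    ∃ i ∈ s, ∀ᶠ z in 𝓝 x, A i z = 0 := by
  classical
  induction s using Finset.induction_on with
  | empty => simpa using h.self_of_nhds
  | insert a s ha ih =>
    simp only [Finset.forall_mem_insert] at hA
    simp only [Finset.prod_insert ha] at h
    by_cases hAa : ∀ᶠ z in 𝓝 x, A a z = 0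
    · exact ⟨a, Finset.mem_insert_self a s, hAa⟩
    · obtain ⟨i, hi, hAi⟩ := ih hA.2 (eventually_eq_zero_of_smul_eq_zero hA.1
        (Finset.analyticAt_fun_prod s hA.2) (not_eventually.1 hAa) h)
      exact ⟨i, Finset.mem_insert_of_mem hi, hAi⟩

theorem exists_rootOfUnity_mul_eq_of_pow_eq_pow {A B : E → ℂ} (hA : AnalyticAt ℂ A x)
    (hB : AnalyticAt ℂ B x) {k : ℕ} (hk : k ≠ 0) (h : ∀ᶠ z in 𝓝 x, A z ^ k = B z ^ k) :
    ∃ ω : ℂ, ω ^ k = 1 ∧ ∀ᶠ z in 𝓝 x, A z = ω * B z := by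
  have hk' : 0 < k := Nat.pos_of_ne_zero hk
  have hprod : ∀ᶠ z in 𝓝 x,
      ∏ ω ∈ Polynomial.nthRootsFinset k (1 : ℂ), (A z - ω * B z) = 0 := by
    filter_upwards [h] with z hz
    rw [← (Complex.isPrimitiveRoot_exp k hk).pow_sub_pow_eq_prod_sub_mul _ _ hk', hz, sub_self]
  obtain ⟨ω, hω, hωAB⟩ := exists_eventually_eq_zero_of_prod_eq_zero
    (fun ω _ => hA.sub (analyticAt_const.mul hB)) hprod
  refine ⟨ω, (Polynomial.mem_nthRootsFinset hk' 1).1 hω, ?_⟩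
  filter_upwards [hωAB] with z hz using sub_eq_zero.1 hz

theorem exists_analyticAt_pow_eq {U : E → ℂ} (hU : AnalyticAt ℂ U x) (hUx : U x ≠ 0) {k : ℕ}
    (hk : k ≠ 0) : ∃ V : E → ℂ, AnalyticAt ℂ V x ∧ V x ≠ 0 ∧ ∀ z, V z ^ k = U z := by
  have hroot : (U x ^ (k : ℂ)⁻¹) ^ k = U x := Complex.cpow_nat_inv_pow _ hk
  refine ⟨fun z => U x ^ (k : ℂ)⁻¹ * (U z / U x) ^ (k : ℂ)⁻¹, ?_, ?_, fun z => ?_⟩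
  · refine analyticAt_const.mul ((hU.div analyticAt_const hUx).cpow analyticAt_const ?_)
    simp [div_self hUx]
  · simp [Complex.cpow_eq_zero_iff, hUx]
  · rw [mul_pow, hroot, Complex.cpow_nat_inv_pow _ hk, mul_div_cancel₀ _ hUx]

end GermAlgebra

section SecondCoordinate

theorem frequently_snd_ne_zero {X : Type*} [TopologicalSpace X] {x : X} :
    ∃ᶠ y in 𝓝 (x, (0 : ℂ)), y.2 ≠ 0 := by
  have hvert : Tendsto (fun t : ℂ => (x, t)) (𝓝[≠] 0) (𝓝 (x, 0)) :=
    (Continuous.tendsto (by fun_prop) 0).mono_left nhdsWithin_le_nhds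
  exact hvert.frequently (eventually_mem_nhdsWithin (a := (0 : ℂ)) (s := {0}ᶜ)).frequently

theorem tendsto_prodMk_zero {X : Type*} [TopologicalSpace X] {x : X} :
    Tendsto (fun z : X => (z, (0 : ℂ))) (𝓝 x) (𝓝 (x, 0)) :=
  Continuous.tendsto (by fun_prop) x

variable {E : Type*} [NormedAddCommGroup E] [NormedSpace ℂ E] {x : E}

theorem analyticAt_comp_prodMk_zero {A : E × ℂ → ℂ} (hA : AnalyticAt ℂ A (x, 0)) :
    AnalyticAt ℂ (fun z => A (z, 0)) x :=
  AnalyticAt.comp (f := fun z : E => (z, (0 : ℂ))) hA (analyticAt_id.prod analyticAt_const)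

theorem exists_eq_snd_mul {A : E × ℂ → ℂ} (hA : AnalyticAt ℂ A (x, 0))
    (hA0 : ∀ᶠ z in 𝓝 x, A (z, 0) = 0) :
    ∃ B : E × ℂ → ℂ, AnalyticAt ℂ B (x, 0) ∧ ∀ᶠ y in 𝓝 (x, 0), A y = y.2 * B y := by
  have hsnd : AnalyticAt ℂ (Prod.snd : E × ℂ → ℂ) (x, 0) := analyticAt_snd
  obtain ⟨K, s, hs, hlip⟩ := (hA.contDiffAt (n := 1)).exists_lipschitzOnWith
  have hproj : Tendsto (fun y : E × ℂ => (y.1, (0 : ℂ))) (𝓝 (x, 0)) (𝓝 (x, 0)) :=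
    Continuous.tendsto' (by fun_prop) _ _ rfl
  have hbound : ∀ᶠ y in 𝓝 (x, (0 : ℂ)), y.2 ≠ 0 → ‖A y / y.2‖ ≤ K := by
    filter_upwards [hs, hproj.eventually hs, (continuousAt_fst (p := (x, (0 : ℂ)))).eventually hA0]
      with y hys hys₀ hAy hy
    rw [norm_div, div_le_iff₀ (norm_pos_iff.2 hy)]
    simpa [hAy, Prod.dist_eq] using hlip.dist_le_mul y hys _ hys₀
  obtain ⟨B, hB, hBA⟩ := exists_analyticAt_extension hsnd frequently_snd_ne_zero
    (hA.eventually_analyticAt.mono fun y hAy hy => hAy.fun_div analyticAt_snd hy) hbound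
  refine ⟨B, hB, eventually_eq_of_forall_ne_zero hsnd hA (hsnd.mul hB) frequently_snd_ne_zero ?_⟩
  filter_upwards [hBA] with y hBy hy
  rw [hBy hy, mul_div_cancel₀ _ hy]

theorem exists_eq_snd_mul_of_mul_eq_snd_pow {A B : E × ℂ → ℂ} {m : ℕ}
    (hA : AnalyticAt ℂ A (x, 0)) (hB : AnalyticAt ℂ B (x, 0))
    (h : ∀ᶠ y in 𝓝 (x, 0), A y * B y = y.2 ^ (m + 1)) (hA0 : ∀ᶠ z in 𝓝 x, A (z, 0) = 0) :
    ∃ A' : E × ℂ → ℂ, AnalyticAt ℂ A' (x, 0) ∧ (∀ᶠ y in 𝓝 (x, 0), A y = y.2 * A' y) ∧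
      ∀ᶠ y in 𝓝 (x, 0), A' y * B y = y.2 ^ m := by
  obtain ⟨A', hA', hAA'⟩ := exists_eq_snd_mul hA hA0
  refine ⟨A', hA', hAA', eventually_eq_of_forall_ne_zero analyticAt_snd (hA'.mul hB)
    (analyticAt_snd.pow m) frequently_snd_ne_zero ?_⟩
  filter_upwards [h, hAA'] with y hy hAy hy0
  refine mul_left_cancel₀ hy0 ?_
  calc y.2 * (A' y * B y) = A y * B y := by rw [hAy, mul_assoc]
    _ = y.2 * y.2 ^ m := by rw [hy, pow_succ']

theorem exists_eq_snd_pow_mul_of_mul_eq_snd_pow {m : ℕ} {A B : E × ℂ → ℂ}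
    (hA : AnalyticAt ℂ A (x, 0)) (hB : AnalyticAt ℂ B (x, 0))
    (h : ∀ᶠ y in 𝓝 (x, 0), A y * B y = y.2 ^ m) :
    ∃ (d e : ℕ) (u w : E × ℂ → ℂ), d + e = m ∧
      (AnalyticAt ℂ u (x, 0) ∧ u (x, 0) ≠ 0 ∧ ∀ᶠ y in 𝓝 (x, 0), A y = y.2 ^ d * u y) ∧
      (AnalyticAt ℂ w (x, 0) ∧ w (x, 0) ≠ 0 ∧ ∀ᶠ y in 𝓝 (x, 0), B y = y.2 ^ e * w y) := by
  induction m generalizing A B with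
  | zero =>
    have hAB : A (x, 0) * B (x, 0) = 1 := by simpa using h.self_of_nhds
    exact ⟨0, 0, A, B, rfl, ⟨hA, left_ne_zero_of_mul_eq_one hAB, by simp⟩,
      ⟨hB, right_ne_zero_of_mul_eq_one hAB, by simp⟩⟩
  | succ m ih =>
    by_cases hA0 : ∀ᶠ z in 𝓝 x, A (z, 0) = 0
    · obtain ⟨A', hA', hAA', h'⟩ := exists_eq_snd_mul_of_mul_eq_snd_pow hA hB h hA0
      obtain ⟨d, e, u, w, rfl, ⟨hu, hux, hAu⟩, hw⟩ := ih hA' hB h'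
      refine ⟨d + 1, e, u, w, by ring, ⟨hu, hux, ?_⟩, hw⟩
      filter_upwards [hAA', hAu] with y hAy hA'y
      rw [hAy, hA'y, pow_succ', mul_assoc]
    · have hB0 : ∀ᶠ z in 𝓝 x, B (z, 0) = 0 :=
        eventually_eq_zero_of_smul_eq_zero (analyticAt_comp_prodMk_zero hA)
          (analyticAt_comp_prodMk_zero hB) (not_eventually.1 hA0)
          ((tendsto_prodMk_zero.eventually h).mono fun z hz => by simpa using hz)
      obtain ⟨B', hB', hBB', h'⟩ := exists_eq_snd_mul_of_mul_eq_snd_pow hB hA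
        (h.mono fun y hy => by rw [mul_comm, hy]) hB0
      obtain ⟨d, e, u, w, rfl, hu, hw, hwx, hBw⟩ :=
        ih hA hB' (h'.mono fun y hy => by rw [mul_comm, hy])
      refine ⟨d, e + 1, u, w, by ring, hu, hw, hwx, ?_⟩
      filter_upwards [hBB', hBw] with y hBy hB'y
      rw [hBy, hB'y, pow_succ', mul_assoc]

end SecondCoordinate

section RootSubstitution

variable {E F : Type*} [NormedAddCommGroup E] [NormedSpace ℂ E] [NormedAddCommGroup F]
  [NormedSpace ℂ F] {x : E} {m : ℕ} {N : E × ℂ → F}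

theorem tendsto_snd_cpow_inv {X : Type*} [TopologicalSpace X] {x : X} {m : ℕ} (hm : m ≠ 0) :
    Tendsto (fun y : X × ℂ => (y.1, y.2 ^ (m : ℂ)⁻¹)) (𝓝 (x, 0)) (𝓝 (x, 0)) := by
  have hroot : ContinuousAt (fun t : ℂ => t ^ (m : ℂ)⁻¹) 0 := by
    refine Complex.continuousAt_cpow_const_of_re_pos (by simp) ?_
    rw [← Complex.ofReal_natCast, ← Complex.ofReal_inv, Complex.ofReal_re]
    positivity
  have hroot0 : (0 : ℂ) ^ (m : ℂ)⁻¹ = 0 := Complex.zero_cpow (by simpa using hm)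
  have hsnd : Tendsto (fun y : X × ℂ => y.2 ^ (m : ℂ)⁻¹) (𝓝 (x, 0)) (𝓝 0) := by
    have hcomp := hroot.tendsto.comp (continuousAt_snd (p := (x, (0 : ℂ))))
    rwa [hroot0] at hcomp
  exact Tendsto.prodMk_nhds continuousAt_fst hsnd

theorem eventually_of_eventually_pow {X : Type*} [TopologicalSpace X] {x : X} {m : ℕ} (hm : m ≠ 0)
    {P : X × ℂ → Prop} (h : ∀ᶠ y in 𝓝 (x, 0), P (y.1, y.2 ^ m)) : ∀ᶠ y in 𝓝 (x, 0), P y :=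
  ((tendsto_snd_cpow_inv hm).eventually h).mono fun y hy => by
    simpa only [Complex.cpow_nat_inv_pow _ hm] using hy

theorem analyticAt_comp_snd_pow {A : E × ℂ → F} (hA : AnalyticAt ℂ A (x, 0)) (hm : m ≠ 0) :
    AnalyticAt ℂ (fun y : E × ℂ => A (y.1, y.2 ^ m)) (x, 0) :=
  AnalyticAt.comp_of_eq (f := fun y : E × ℂ => (y.1, y.2 ^ m)) hA
    (analyticAt_fst.prod (analyticAt_snd.pow m)) (by simp [hm])

-- The principal branch of the root may jump at `y₀`; by invariance it can be exchanged for the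
-- branch `t ↦ t₀ ^ (1 / m) * (t / t₀) ^ (1 / m)`, which is analytic near `t₀ = y₀.2`.
theorem analyticAt_comp_snd_cpow_inv (hm : m ≠ 0)
    (hinv : ∀ (z : E) (s t : ℂ), s ^ m = t ^ m → N (z, s) = N (z, t)) {y₀ : E × ℂ}
    (hy₀ : y₀.2 ≠ 0) (hN : AnalyticAt ℂ N (y₀.1, y₀.2 ^ (m : ℂ)⁻¹)) :
    AnalyticAt ℂ (fun y : E × ℂ => N (y.1, y.2 ^ (m : ℂ)⁻¹)) y₀ := by
  let branch (t : ℂ) : ℂ := y₀.2 ^ (m : ℂ)⁻¹ * (t / y₀.2) ^ (m : ℂ)⁻¹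
  have hbranch_pow (t : ℂ) : (t ^ (m : ℂ)⁻¹) ^ m = branch t ^ m := by
    rw [mul_pow, Complex.cpow_nat_inv_pow _ hm, Complex.cpow_nat_inv_pow _ hm,
      Complex.cpow_nat_inv_pow _ hm, mul_div_cancel₀ _ hy₀]
  have hbranch : AnalyticAt ℂ branch y₀.2 := by
    refine analyticAt_const.mul ((analyticAt_id.div analyticAt_const hy₀).cpow analyticAt_const ?_)
    simp [div_self hy₀]
  have hbranch₀ : branch y₀.2 = y₀.2 ^ (m : ℂ)⁻¹ := by simp [branch, div_self hy₀]
  have heq : (fun y : E × ℂ => N (y.1, y.2 ^ (m : ℂ)⁻¹)) = fun y => N (y.1, branch y.2) :=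
    funext fun y => hinv _ _ _ (hbranch_pow y.2)
  rw [heq]
  exact AnalyticAt.comp_of_eq (f := fun y : E × ℂ => (y.1, branch y.2)) hN
    (analyticAt_fst.prod (AnalyticAt.comp (f := Prod.snd) hbranch analyticAt_snd))
    (by rw [hbranch₀])

theorem exists_analyticAt_comp_snd_pow_eq [CompleteSpace F] (hm : m ≠ 0)
    (hN : AnalyticAt ℂ N (x, 0))
    (hinv : ∀ (z : E) (s t : ℂ), s ^ m = t ^ m → N (z, s) = N (z, t)) :
    ∃ A : E × ℂ → F, AnalyticAt ℂ A (x, 0) ∧ ∀ᶠ y in 𝓝 (x, 0), A (y.1, y.2 ^ m) = N y := by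
  have hroot := tendsto_snd_cpow_inv (x := x) hm
  have hbound : ∀ᶠ y in 𝓝 (x, (0 : ℂ)), ‖N (y.1, y.2 ^ (m : ℂ)⁻¹)‖ < ‖N (x, 0)‖ + 1 :=
    (hN.continuousAt.tendsto.comp hroot).norm.eventually_lt_const (lt_add_one _)
  obtain ⟨A, hA, hAN⟩ := exists_analyticAt_extension (D := Prod.snd) analyticAt_snd
    frequently_snd_ne_zero
    ((hroot.eventually hN.eventually_analyticAt).mono fun y hNy hy =>
      analyticAt_comp_snd_cpow_inv hm hinv hy hNy)
    (hbound.mono fun y hy _ => hy.le)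
  refine ⟨A, hA, eventually_eq_of_forall_ne_zero analyticAt_snd (analyticAt_comp_snd_pow hA hm) hN
    frequently_snd_ne_zero ?_⟩
  have hpow : Tendsto (fun y : E × ℂ => (y.1, y.2 ^ m)) (𝓝 (x, 0)) (𝓝 (x, 0)) :=
    Continuous.tendsto' (by fun_prop) _ _ (by simp [hm])
  filter_upwards [hpow.eventually hAN] with y hAy hy
  rw [hAy (pow_ne_zero m hy)]
  exact hinv _ _ _ (Complex.cpow_nat_inv_pow _ hm)

end RootSubstitution

section CyclicNorm

open Polynomial (nthRootsFinset mem_nthRootsFinset)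

/-- The norm of `G` for the cyclic covering `(z, s) ↦ (z, s ^ m)`: the product of `G` over the
orbit of a point under the `m`-th roots of unity acting on the second coordinate. -/
noncomputable def cyclicNorm {X : Type*} (m : ℕ) (G : X × ℂ → ℂ) (y : X × ℂ) : ℂ :=
  ∏ ω ∈ nthRootsFinset m (1 : ℂ), G (y.1, ω * y.2)

theorem cyclicNorm_eq_of_pow_eq {X : Type*} {m : ℕ} (hm : m ≠ 0) (G : X × ℂ → ℂ) (z : X) {s t : ℂ}
    (h : s ^ m = t ^ m) : cyclicNorm m G (z, s) = cyclicNorm m G (z, t) := by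
  rcases eq_or_ne t 0 with rfl | ht
  · rw [zero_pow hm, pow_eq_zero_iff hm] at h
    rw [h]
  · have hs : s ≠ 0 := by
      rintro rfl
      exact pow_ne_zero m ht (by rw [← h, zero_pow hm])
    have hmem {a b ω : ℂ} (ha : a ≠ 0) (hab : b ^ m = a ^ m) (hω : ω ∈ nthRootsFinset m (1 : ℂ)) :
        ω * (b / a) ∈ nthRootsFinset m (1 : ℂ) := by
      rw [mem_nthRootsFinset (Nat.pos_of_ne_zero hm)] at hω ⊢
      rw [mul_pow, hω, div_pow, hab, div_self (pow_ne_zero _ ha), one_mul]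
    refine Finset.prod_bij' (fun ω _ => ω * (s / t)) (fun ω _ => ω * (t / s))
      (fun ω hω => hmem ht h hω) (fun ω hω => hmem hs h.symm hω) ?_ ?_ ?_ <;>
    · intro ω _
      field_simp

theorem cyclicNorm_mk_zero {X : Type*} {m : ℕ} (hm : m ≠ 0) (G : X × ℂ → ℂ) (z : X) :
    cyclicNorm m G (z, 0) = G (z, 0) ^ m := by
  simp [cyclicNorm, (Complex.isPrimitiveRoot_exp m hm).card_nthRootsFinset]

theorem analyticAt_cyclicNorm {E : Type*} [NormedAddCommGroup E] [NormedSpace ℂ E] {x : E}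
    {G : E × ℂ → ℂ} (hG : AnalyticAt ℂ G (x, 0)) (m : ℕ) : AnalyticAt ℂ (cyclicNorm m G) (x, 0) :=
  Finset.analyticAt_fun_prod _ fun ω _ =>
    AnalyticAt.comp_of_eq (f := fun y : E × ℂ => (y.1, ω * y.2)) hG
      (analyticAt_fst.prod (analyticAt_const.mul analyticAt_snd)) (by simp)

theorem eventually_cyclicNorm_mul_eq_pow {X : Type*} [TopologicalSpace X] {x : X} {m : ℕ}
    (hm : m ≠ 0) {G H Φ : X × ℂ → ℂ} (h : ∀ᶠ y in 𝓝 (x, 0), G y * H y = Φ (y.1, y.2 ^ m)) :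
    ∀ᶠ y in 𝓝 (x, 0), cyclicNorm m G y * cyclicNorm m H y = Φ (y.1, y.2 ^ m) ^ m := by
  have hrot (ω : ℂ) : Tendsto (fun y : X × ℂ => (y.1, ω * y.2)) (𝓝 (x, 0)) (𝓝 (x, 0)) :=
    Continuous.tendsto' (by fun_prop) _ _ (by simp)
  have hall : ∀ᶠ y in 𝓝 (x, (0 : ℂ)), ∀ ω ∈ nthRootsFinset m (1 : ℂ),
      G (y.1, ω * y.2) * H (y.1, ω * y.2) = Φ (y.1, (ω * y.2) ^ m) :=
    (eventually_all_finset _).2 fun ω _ => (hrot ω).eventually h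
  filter_upwards [hall] with y hy
  calc cyclicNorm m G y * cyclicNorm m H y
      = ∏ _ω ∈ nthRootsFinset m (1 : ℂ), Φ (y.1, y.2 ^ m) := by
        rw [cyclicNorm, cyclicNorm, ← Finset.prod_mul_distrib]
        refine Finset.prod_congr rfl fun ω hω => ?_
        rw [hy ω hω, mul_pow, (mem_nthRootsFinset (Nat.pos_of_ne_zero hm) 1).1 hω, one_mul]
    _ = Φ (y.1, y.2 ^ m) ^ m := by
        rw [Finset.prod_const, (Complex.isPrimitiveRoot_exp m hm).card_nthRootsFinset]

end CyclicNorm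

section FactorizationAddPow

variable {E : Type*} [NormedAddCommGroup E] [NormedSpace ℂ E] {x : E} {f : E → ℂ}
  {G H : E × ℂ → ℂ} {m : ℕ}

theorem exists_mul_eq_snd_pow_of_mul_eq_add_pow (hf : AnalyticAt ℂ f x) (hfx : f x = 0)
    (hm : m ≠ 0) (hG : AnalyticAt ℂ G (x, 0)) (hH : AnalyticAt ℂ H (x, 0))
    (h : ∀ᶠ y in 𝓝 (x, 0), G y * H y = f y.1 + y.2 ^ m) :
    ∃ A B : E × ℂ → ℂ, AnalyticAt ℂ A (x, 0) ∧ AnalyticAt ℂ B (x, 0) ∧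
      (∀ᶠ y in 𝓝 (x, 0), A y * B y = y.2 ^ m) ∧
      (∀ᶠ z in 𝓝 x, A (z, f z) = G (z, 0) ^ m) ∧ ∀ᶠ z in 𝓝 x, B (z, f z) = H (z, 0) ^ m := by
  have hdescend {K : E × ℂ → ℂ} (hK : AnalyticAt ℂ K (x, 0)) :=
    exists_analyticAt_comp_snd_pow_eq hm (analyticAt_cyclicNorm hK m)
      fun z _ _ => cyclicNorm_eq_of_pow_eq hm K z
  obtain ⟨A, hA, hAG⟩ := hdescend hG
  obtain ⟨B, hB, hBH⟩ := hdescend hH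
  have hAB : ∀ᶠ y in 𝓝 (x, 0), A y * B y = (f y.1 + y.2) ^ m := by
    refine eventually_of_eventually_pow hm ?_
    filter_upwards [hAG, hBH,
      eventually_cyclicNorm_mul_eq_pow (Φ := fun y => f y.1 + y.2) hm h] with y hAy hBy hy
    rw [hAy, hBy, hy]
  let shift (y : E × ℂ) : E × ℂ := (y.1, y.2 - f y.1)
  have hshift : AnalyticAt ℂ shift (x, 0) :=
    analyticAt_fst.prod (analyticAt_snd.sub (AnalyticAt.comp (f := Prod.fst) hf analyticAt_fst))
  have hshift₀ : shift (x, 0) = (x, 0) := by simp [shift, hfx]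
  have hvalue {K C : E × ℂ → ℂ}
      (hCK : ∀ᶠ y in 𝓝 (x, 0), C (y.1, y.2 ^ m) = cyclicNorm m K y) :
      ∀ᶠ z in 𝓝 x, C (shift (z, f z)) = K (z, 0) ^ m := by
    filter_upwards [tendsto_prodMk_zero.eventually hCK] with z hz
    simpa only [shift, sub_self, zero_pow hm, cyclicNorm_mk_zero hm] using hz
  refine ⟨A ∘ shift, B ∘ shift, hA.comp_of_eq hshift hshift₀, hB.comp_of_eq hshift hshift₀, ?_,
    hvalue hAG, hvalue hBH⟩
  filter_upwards [(hshift₀ ▸ hshift.continuousAt.tendsto).eventually hAB] with y hy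
  simpa [shift] using hy

theorem exists_pow_eq_pow_mul_of_mul_eq_add_pow (hf : AnalyticAt ℂ f x) (hfx : f x = 0)
    (hm : m ≠ 0) (hG : AnalyticAt ℂ G (x, 0)) (hH : AnalyticAt ℂ H (x, 0)) (hGx : G (x, 0) = 0)
    (hHx : H (x, 0) = 0) (h : ∀ᶠ y in 𝓝 (x, 0), G y * H y = f y.1 + y.2 ^ m) :
    ∃ (d : ℕ) (U : E → ℂ), 0 < d ∧ d < m ∧ AnalyticAt ℂ U x ∧ U x ≠ 0 ∧
      ∀ᶠ z in 𝓝 x, G (z, 0) ^ m = f z ^ d * U z := by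
  obtain ⟨A, B, hA, hB, hAB, hAG, hBH⟩ :=
    exists_mul_eq_snd_pow_of_mul_eq_add_pow hf hfx hm hG hH h
  obtain ⟨d, e, u, w, hde, ⟨hu, hux, hAu⟩, ⟨-, hwx, hBw⟩⟩ :=
    exists_eq_snd_pow_mul_of_mul_eq_snd_pow hA hB hAB
  have hgraph : AnalyticAt ℂ (fun z => (z, f z)) x := analyticAt_id.prod hf
  have hpos {K C v : E × ℂ → ℂ} {j : ℕ} (hKx : K (x, 0) = 0) (hvx : v (x, 0) ≠ 0)
      (hCK : ∀ᶠ z in 𝓝 x, C (z, f z) = K (z, 0) ^ m)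
      (hCv : ∀ᶠ y in 𝓝 (x, 0), C y = y.2 ^ j * v y) : 0 < j := by
    refine Nat.pos_of_ne_zero fun hj => hvx ?_
    have hCx : C (x, 0) = 0 := by simpa [hfx, hKx, hm] using hCK.self_of_nhds
    simpa [hCx, hj] using hCv.self_of_nhds.symm
  have he : 0 < e := hpos hHx hwx hBH hBw
  refine ⟨d, fun z => u (z, f z), hpos hGx hux hAG hAu, by omega,
    hu.comp_of_eq hgraph (by rw [hfx]), by simpa only [hfx] using hux, ?_⟩
  have hgraph_tendsto : Tendsto (fun z => (z, f z)) (𝓝 x) (𝓝 (x, 0)) :=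
    hfx ▸ hgraph.continuousAt.tendsto
  filter_upwards [hAG, hgraph_tendsto.eventually hAu] with z hAz hAuz
  rw [← hAz, hAuz]

end FactorizationAddPow

section ProperPowers

variable {E : Type*} [NormedAddCommGroup E] [NormedSpace ℂ E] {x : E} {f : E → ℂ}

/-- The germ of `f` at `x` is a proper power in the ring of holomorphic germs. -/
def IsProperPowerAt (f : E → ℂ) (x : E) : Prop :=
  ∃ (g : E → ℂ) (k : ℕ), AnalyticAt ℂ g x ∧ 2 ≤ k ∧ ∀ᶠ z in 𝓝 x, f z = g z ^ k

theorem IsProperPowerAt.of_const_mul {c : ℂ} (hc : c ≠ 0)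
    (h : IsProperPowerAt (fun z => c * f z) x) : IsProperPowerAt f x := by
  obtain ⟨g, k, hg, hk, hfg⟩ := h
  obtain ⟨b, hb⟩ := IsAlgClosed.exists_pow_nat_eq c⁻¹ (show 0 < k by omega)
  refine ⟨fun z => b * g z, k, analyticAt_const.mul hg, hk, ?_⟩
  filter_upwards [hfg] with z hz
  rw [mul_pow, hb, ← hz, inv_mul_cancel_left₀ hc]

theorem exists_eq_pow_of_pow_eq_pow_mul_add_one (hf : AnalyticAt ℂ f x)
    (hf0 : ∃ᶠ z in 𝓝 x, f z ≠ 0) {Q : E → ℂ} (hQ : AnalyticAt ℂ Q x) {m a : ℕ} (hm : m ≠ 0)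
    (h : ∀ᶠ z in 𝓝 x, Q z ^ m = f z ^ (a * m + 1)) :
    ∃ R : E → ℂ, AnalyticAt ℂ R x ∧ ∀ᶠ z in 𝓝 x, f z = R z ^ m := by
  have hquot : ∀ᶠ z in 𝓝 x, f z ≠ 0 → (Q z / f z ^ a) ^ m = f z := by
    filter_upwards [h] with z hz hfz
    rw [div_pow, hz, ← pow_mul, pow_succ, mul_div_cancel_left₀ _ (pow_ne_zero _ hfz)]
  have hbound : ∀ᶠ z in 𝓝 x, f z ≠ 0 → ‖Q z / f z ^ a‖ ≤ ‖f x‖ + 1 := by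
    filter_upwards [hquot, hf.continuousAt.norm.eventually_lt_const (lt_add_one ‖f x‖)]
      with z hz hfz hfz0
    by_contra! hlarge
    have hone : 1 ≤ ‖Q z / f z ^ a‖ := (le_add_of_nonneg_left (norm_nonneg _)).trans hlarge.le
    have hle : ‖Q z / f z ^ a‖ ≤ ‖f z‖ := by
      simpa only [← norm_pow, hz hfz0] using le_self_pow₀ hone hm
    exact (hlarge.trans_le hle).not_gt hfz
  obtain ⟨R, hR, hRQ⟩ := exists_analyticAt_extension hf hf0
    (hQ.eventually_analyticAt.and hf.eventually_analyticAt |>.mono fun z hz hfz =>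
      hz.1.fun_div (hz.2.pow a) (pow_ne_zero a hfz)) hbound
  refine ⟨R, hR, eventually_eq_of_forall_ne_zero hf hf (hR.pow m) hf0 ?_⟩
  filter_upwards [hquot, hRQ] with z hz hRz hfz
  rw [hRz hfz]
  exact (hz hfz).symm

theorem exists_eq_pow_of_pow_eq_pow_mul_of_coprime (hf : AnalyticAt ℂ f x)
    (hf0 : ∃ᶠ z in 𝓝 x, f z ≠ 0) {P U : E → ℂ} (hP : AnalyticAt ℂ P x) (hU : AnalyticAt ℂ U x)
    (hUx : U x ≠ 0) {m d : ℕ} (hm : 1 < m) (hdm : d.Coprime m)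
    (h : ∀ᶠ z in 𝓝 x, P z ^ m = f z ^ d * U z) :
    ∃ R : E → ℂ, AnalyticAt ℂ R x ∧ ∀ᶠ z in 𝓝 x, f z = R z ^ m := by
  have hm0 : m ≠ 0 := by omega
  obtain ⟨b, -, hb⟩ := Nat.exists_mul_mod_eq_one_of_coprime hdm hm
  have hbezout : d * b = d * b / m * m + 1 := by rw [← hb, Nat.div_add_mod']
  obtain ⟨V, hV, hVx, hVU⟩ := exists_analyticAt_pow_eq hU hUx hm0
  refine exists_eq_pow_of_pow_eq_pow_mul_add_one hf hf0 ((hP.div hV hVx).pow b)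
    (a := d * b / m) hm0 ?_
  filter_upwards [h, hV.continuousAt.eventually_ne hVx] with z hz hVz
  have hquot : (P z / V z) ^ m = f z ^ d := by
    rw [div_pow, hz, hVU, mul_div_cancel_right₀ _ (hVU z ▸ pow_ne_zero m hVz)]
  rw [← hbezout, pow_mul, ← hquot, Pi.pow_apply, Pi.div_apply, pow_right_comm]

theorem exists_pow_eq_pow_mul_of_pow_mul_eq (hf : AnalyticAt ℂ f x) {P U : E → ℂ}
    (hP : AnalyticAt ℂ P x) (hU : AnalyticAt ℂ U x) (hUx : U x ≠ 0) {m d e : ℕ} (he : e ≠ 0)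
    (h : ∀ᶠ z in 𝓝 x, P z ^ (m * e) = f z ^ (d * e) * U z) :
    ∃ V : E → ℂ, AnalyticAt ℂ V x ∧ V x ≠ 0 ∧ ∀ᶠ z in 𝓝 x, P z ^ m = f z ^ d * V z := by
  obtain ⟨V, hV, hVx, hVU⟩ := exists_analyticAt_pow_eq hU hUx he
  obtain ⟨ω, hω, hP⟩ := exists_rootOfUnity_mul_eq_of_pow_eq_pow (hP.fun_pow m)
    ((hf.fun_pow d).fun_mul hV) he
    (h.mono fun z hz => by rw [← pow_mul, hz, mul_pow, ← pow_mul, hVU])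
  refine ⟨fun z => ω * V z, analyticAt_const.mul hV, mul_ne_zero ?_ hVx, ?_⟩
  · rintro rfl
    exact zero_ne_one ((zero_pow he).symm.trans hω)
  · filter_upwards [hP] with z hz
    rw [hz, mul_left_comm]

theorem isProperPowerAt_of_pow_eq_pow_mul (hf : AnalyticAt ℂ f x) (hf0 : ∃ᶠ z in 𝓝 x, f z ≠ 0)
    {P U : E → ℂ} (hP : AnalyticAt ℂ P x) (hU : AnalyticAt ℂ U x) (hUx : U x ≠ 0) {m d : ℕ}
    (hd : 0 < d) (hdm : d < m) (h : ∀ᶠ z in 𝓝 x, P z ^ m = f z ^ d * U z) :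
    IsProperPowerAt f x := by
  obtain ⟨d', m', hcop, hd', hm'⟩ := Nat.exists_coprime d m
  have hgcd : d.gcd m ≠ 0 := (Nat.gcd_pos_of_pos_left m hd).ne'
  obtain ⟨V, hV, hVx, hPV⟩ :=
    exists_pow_eq_pow_mul_of_pow_mul_eq (m := m') (d := d') hf hP hU hUx hgcd
      (h.mono fun z hz => by rw [← hm', ← hd', hz])
  have hdm' : d' < m' := lt_of_mul_lt_mul_right (hd' ▸ hm' ▸ hdm) (Nat.zero_le (d.gcd m))
  have hd'0 : 0 < d' := Nat.pos_of_mul_pos_right (hd' ▸ hd)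
  obtain ⟨R, hR, hfR⟩ :=
    exists_eq_pow_of_pow_eq_pow_mul_of_coprime hf hf0 hP hV hVx (by omega) hcop hPV
  exact ⟨R, m', hR, by omega, hfR⟩

end ProperPowers

section LocalCoordinate

theorem exists_analyticAt_rightInverse {ψ : ℂ → ℂ} {x : ℂ} (hψ : AnalyticAt ℂ ψ x)
    (hψ' : deriv ψ x ≠ 0) :
    ∃ r : ℂ → ℂ, AnalyticAt ℂ r (ψ x) ∧ r (ψ x) = x ∧ ∀ᶠ s in 𝓝 (ψ x), ψ (r s) = s :=
  ⟨_, hψ.analyticAt_localInverse hψ', HasStrictFDerivAt.localInverse_apply_image ..,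
    HasStrictDerivAt.eventually_right_inverse hψ.hasStrictDerivAt hψ'⟩

theorem exists_analyticAt_comp_eq_pow {κ : ℂ → ℂ} (hκ : AnalyticAt ℂ κ 0) (hκ0 : κ 0 = 0)
    (hκne : ∃ᶠ s in 𝓝 0, κ s ≠ 0) :
    ∃ (m : ℕ) (r : ℂ → ℂ), m ≠ 0 ∧ AnalyticAt ℂ r 0 ∧ r 0 = 0 ∧ ∀ᶠ s in 𝓝 0, κ (r s) = s ^ m := by
  obtain ⟨m, u, hu, hu0, hκu⟩ :=
    hκ.exists_eventuallyEq_pow_smul_nonzero_iff.2 (not_eventually.2 hκne)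
  have hm : m ≠ 0 := by
    rintro rfl
    exact hu0 (by simpa [hκ0] using hκu.self_of_nhds.symm)
  obtain ⟨V, hV, hV0, hVu⟩ := exists_analyticAt_pow_eq hu hu0 hm
  have hderiv : HasDerivAt (fun s => s * V s) (1 * V 0 + 0 * deriv V 0) 0 :=
    (hasDerivAt_id (0 : ℂ)).mul hV.differentiableAt.hasDerivAt
  have hψ : AnalyticAt ℂ (fun s => s * V s) 0 := analyticAt_id.mul hV
  obtain ⟨r, hr, hr0, hVr⟩ := exists_analyticAt_rightInverse hψ
    (by rw [hderiv.deriv]; simpa using hV0)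
  simp only [zero_mul] at hr hr0 hVr
  refine ⟨m, r, hm, hr, hr0, ?_⟩
  have hr_tendsto : Tendsto r (𝓝 0) (𝓝 0) := by simpa only [hr0] using hr.continuousAt.tendsto
  filter_upwards [hr_tendsto.eventually hκu, hVr] with s hκs hVs
  rw [hκs, ← hVu, sub_zero, smul_eq_mul, ← mul_pow, hVs]

theorem isProperPowerAt_of_mul_eq_add {E : Type*} [NormedAddCommGroup E] [NormedSpace ℂ E] {x : E}
    {f : E → ℂ} {κ : ℂ → ℂ} {G H : E × ℂ → ℂ} (hf : AnalyticAt ℂ f x) (hfx : f x = 0)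
    (hf0 : ∃ᶠ z in 𝓝 x, f z ≠ 0) (hκ : AnalyticAt ℂ κ 0) (hκ0 : κ 0 = 0)
    (hκne : ∃ᶠ s in 𝓝 0, κ s ≠ 0) (hG : AnalyticAt ℂ G (x, 0)) (hH : AnalyticAt ℂ H (x, 0))
    (hGx : G (x, 0) = 0) (hHx : H (x, 0) = 0)
    (h : ∀ᶠ y in 𝓝 (x, 0), G y * H y = f y.1 + κ y.2) : IsProperPowerAt f x := by
  obtain ⟨m, r, hm, hr, hr0, hκr⟩ := exists_analyticAt_comp_eq_pow hκ hκ0 hκne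
  let coord (y : E × ℂ) : E × ℂ := (y.1, r y.2)
  have hcoord : AnalyticAt ℂ coord (x, 0) :=
    analyticAt_fst.prod (AnalyticAt.comp (f := Prod.snd) hr analyticAt_snd)
  have hcoord₀ : coord (x, 0) = (x, 0) := by simp [coord, hr0]
  have hcoord_tendsto : Tendsto coord (𝓝 (x, 0)) (𝓝 (x, 0)) := by
    simpa only [hcoord₀] using hcoord.continuousAt.tendsto
  have hadd : ∀ᶠ y in 𝓝 (x, 0), G (coord y) * H (coord y) = f y.1 + y.2 ^ m := by
    filter_upwards [hcoord_tendsto.eventually h, continuousAt_snd.eventually hκr] with y hy hκy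
    rw [hy, hκy]
  have hGc : AnalyticAt ℂ (fun y => G (coord y)) (x, 0) := hG.comp_of_eq hcoord hcoord₀
  have hHc : AnalyticAt ℂ (fun y => H (coord y)) (x, 0) := hH.comp_of_eq hcoord hcoord₀
  obtain ⟨d, U, hd, hdm, hU, hUx, hGU⟩ := exists_pow_eq_pow_mul_of_mul_eq_add_pow hf hfx hm hGc hHc
    (by rw [hcoord₀, hGx]) (by rw [hcoord₀, hHx]) hadd
  exact isProperPowerAt_of_pow_eq_pow_mul hf hf0 (analyticAt_comp_prodMk_zero hGc) hU hUx hd hdm hGU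

end LocalCoordinate

section Complexification

variable {ι : Type*} [Fintype ι]

/-- The complexification of a real power series on `ℝ^ι`: each homogeneous term is expanded in
coordinate monomials, and the same coefficients are used with complex coordinates. -/
noncomputable def complexifiedSeries [DecidableEq ι] (p : FormalMultilinearSeries ℝ (ι → ℝ) ℝ) :
    FormalMultilinearSeries ℂ (ι → ℂ) ℂ := fun k =>
  ∑ j : Fin k → ι, (p k fun i => Pi.single (j i) 1 : ℂ) •
    (ContinuousMultilinearMap.mkPiAlgebra ℂ (Fin k) ℂ).compContinuousLinearMap
      fun i => ContinuousLinearMap.proj (R := ℂ) (φ := fun _ : ι => ℂ) (j i)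

theorem complexifiedSeries_apply [DecidableEq ι] (p : FormalMultilinearSeries ℝ (ι → ℝ) ℝ) (k : ℕ)
    (v : Fin k → ι → ℂ) : complexifiedSeries p k v =
      ∑ j : Fin k → ι, (p k fun i => Pi.single (j i) 1 : ℂ) * ∏ i, v i (j i) :=
  sum_apply ..

theorem complexifiedSeries_apply_ofReal [DecidableEq ι] (p : FormalMultilinearSeries ℝ (ι → ℝ) ℝ)
    (k : ℕ) (x : ι → ℝ) : complexifiedSeries p k (fun _ i => (x i : ℂ)) = (p k fun _ => x : ℝ) := by
  have hx : x = ∑ i, x i • Pi.single i (1 : ℝ) := pi_eq_sum_univ' x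
  conv_rhs => rw [hx]
  rw [complexifiedSeries_apply, ContinuousMultilinearMap.map_sum, Complex.ofReal_sum]
  refine Finset.sum_congr rfl fun j _ => ?_
  rw [ContinuousMultilinearMap.map_smul_univ, smul_eq_mul, Complex.ofReal_mul, Complex.ofReal_prod,
    mul_comm]

theorem norm_complexifiedSeries_le [DecidableEq ι] (p : FormalMultilinearSeries ℝ (ι → ℝ) ℝ)
    (k : ℕ) : ‖complexifiedSeries p k‖ ≤ Fintype.card ι ^ k * ‖p k‖ := by
  refine ContinuousMultilinearMap.opNorm_le_bound (by positivity) fun v => ?_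
  rw [complexifiedSeries_apply]
  calc ‖∑ j : Fin k → ι, (p k fun i => Pi.single (j i) 1 : ℂ) * ∏ i, v i (j i)‖
      ≤ ∑ _j : Fin k → ι, ‖p k‖ * ∏ i, ‖v i‖ := by
        refine norm_sum_le_of_le _ fun j _ => ?_
        rw [norm_mul, Complex.norm_real, norm_prod]
        gcongr with i
        · simpa [Pi.norm_single] using (p k).le_opNorm fun i => Pi.single (j i) 1
        · exact norm_le_pi_norm (v i) (j i)
    _ = Fintype.card ι ^ k * ‖p k‖ * ∏ i, ‖v i‖ := by
        simp [mul_assoc]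

theorem radius_complexifiedSeries_pos [DecidableEq ι] {p : FormalMultilinearSeries ℝ (ι → ℝ) ℝ}
    (hp : 0 < p.radius) : 0 < (complexifiedSeries p).radius := by
  obtain ⟨r, hr, hrp⟩ := ENNReal.lt_iff_exists_nnreal_btwn.1 hp
  obtain ⟨C, -, hC⟩ := p.norm_mul_pow_le_of_lt_radius hrp
  have hcard : (Fintype.card ι : ℝ) ≤ Fintype.card ι + 1 := le_add_of_nonneg_right zero_le_one
  refine (ENNReal.coe_pos.2 (?_ : 0 < r / (Fintype.card ι + 1))).trans_le
    ((complexifiedSeries p).le_radius_of_bound C fun k => ?_)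
  · exact div_pos (ENNReal.coe_pos.1 hr) (by positivity)
  calc ‖complexifiedSeries p k‖ * (r / (Fintype.card ι + 1) : NNReal) ^ k
      ≤ (Fintype.card ι + 1) ^ k * ‖p k‖ * (r / (Fintype.card ι + 1) : NNReal) ^ k := by
        gcongr
        exact (norm_complexifiedSeries_le p k).trans (by gcongr)
    _ = ‖p k‖ * r ^ k := by
        push_cast
        rw [div_pow]
        field_simp
    _ ≤ C := hC k

theorem exists_complexification {g : (ι → ℝ) → ℝ} (hg : AnalyticAt ℝ g 0) :
    ∃ G : (ι → ℂ) → ℂ, AnalyticAt ℂ G 0 ∧ ∀ᶠ x in 𝓝 (0 : ι → ℝ), G (fun i => (x i : ℂ)) = g x := by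
  classical
  obtain ⟨p, hp⟩ := hg
  have hsum := ((complexifiedSeries p).hasFPowerSeriesOnBall
    (radius_complexifiedSeries_pos hp.radius_pos)).hasFPowerSeriesAt
  refine ⟨(complexifiedSeries p).sum, hsum.analyticAt, ?_⟩
  have hcast : Tendsto (fun (x : ι → ℝ) i => (x i : ℂ)) (𝓝 0) (𝓝 0) :=
    Continuous.tendsto' (by fun_prop) _ _ (by ext; simp)
  filter_upwards [hp.eventually_hasSum, hcast.eventually hsum.eventually_hasSum] with x hx hGx
  simp only [complexifiedSeries_apply_ofReal, zero_add] at hx hGx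
  exact hGx.unique (Complex.hasSum_ofReal.2 hx)

theorem exists_polarization {g : (ι → ℂ) → ℝ} (hg : AnalyticAt ℝ g 0) :
    ∃ G : (ι → ℂ) × (ι → ℂ) → ℂ, AnalyticAt ℂ G 0 ∧
      ∀ᶠ z in 𝓝 (0 : ι → ℂ), G (z, star z) = g z := by
  let ofReIm (x : ι ⊕ ι → ℝ) (j : ι) : ℂ := x (.inl j) + x (.inr j) * Complex.I
  let reIm (z : ι → ℂ) : ι ⊕ ι → ℝ := Sum.elim (fun j => (z j).re) fun j => (z j).im
  let polarReIm (p : (ι → ℂ) × (ι → ℂ)) : ι ⊕ ι → ℂ :=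
    Sum.elim (fun j => (p.1 j + p.2 j) / 2) fun j => (p.1 j - p.2 j) / (2 * Complex.I)
  have hofReIm : AnalyticAt ℝ ofReIm 0 := by
    have hcoord (k : ι ⊕ ι) : AnalyticAt ℝ (fun x : ι ⊕ ι → ℝ => (x k : ℂ)) 0 :=
      (Complex.ofRealCLM.analyticAt _).comp (analyticAt_pi_iff.1 analyticAt_id k)
    exact analyticAt_pi_iff.2 fun j => (hcoord _).add ((hcoord _).mul analyticAt_const)
  have hpolarReIm : AnalyticAt ℂ polarReIm 0 := by
    have hfst (j : ι) : AnalyticAt ℂ (fun p : (ι → ℂ) × (ι → ℂ) => p.1 j) 0 :=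
      analyticAt_pi_iff.1 analyticAt_fst j
    have hsnd (j : ι) : AnalyticAt ℂ (fun p : (ι → ℂ) × (ι → ℂ) => p.2 j) 0 :=
      analyticAt_pi_iff.1 analyticAt_snd j
    refine analyticAt_pi_iff.2 ?_
    rintro (j | j)
    · exact ((hfst j).add (hsnd j)).div analyticAt_const (by simp)
    · exact ((hfst j).sub (hsnd j)).div analyticAt_const (by simp)
  have hreIm : Tendsto reIm (𝓝 0) (𝓝 0) := by
    refine Continuous.tendsto' (continuous_pi ?_) _ _ (by ext (_ | _) <;> simp [reIm])
    rintro (j | j)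
    · exact Complex.continuous_re.comp (continuous_apply j)
    · exact Complex.continuous_im.comp (continuous_apply j)
  obtain ⟨G, hG, hGg⟩ := exists_complexification
    (hg.comp_of_eq hofReIm (by ext j; simp [ofReIm]))
  refine ⟨G ∘ polarReIm, hG.comp_of_eq hpolarReIm (by ext (_ | _) <;> simp [polarReIm]), ?_⟩
  filter_upwards [hreIm.eventually hGg] with z hz
  have hpolar : polarReIm (z, star z) = fun i => (reIm z i : ℂ) := by
    ext (j | j)
    · simp [polarReIm, reIm, Complex.re_eq_add_conj]
    · simp [polarReIm, reIm, Complex.im_eq_sub_conj]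
  have hinv : ofReIm (reIm z) = z := funext fun j => Complex.re_add_im (z j)
  rw [Function.comp_apply, hpolar, hz, Function.comp_apply, hinv]

end Complexification

section Antidiagonal

variable {E F : Type*} [NormedAddCommGroup E] [NormedSpace ℂ E] [StarAddMonoid E]
  [StarModule ℂ E] [NormedStarGroup E] [NormedAddCommGroup F] [NormedSpace ℂ F]

theorem exists_eq_antidiagonal_add_I_smul (p : E × E) :
    ∃ x y : E, p = (x, star x) + Complex.I • (y, star y) ∧ ‖x‖ ≤ ‖p‖ := by
  refine ⟨(2⁻¹ : ℂ) • (p.1 + star p.2), (-Complex.I / 2 : ℂ) • (p.1 - star p.2), ?_, ?_⟩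
  · have hI : Complex.I * (-Complex.I / 2) = 2⁻¹ := by
      linear_combination (-1 / 2 : ℂ) * Complex.I_mul_I
    have hI' : Complex.I * star (-Complex.I / 2) = -2⁻¹ := by
      rw [star_div₀, star_neg, star_ofNat, Complex.star_def, Complex.conj_I]
      linear_combination (1 / 2 : ℂ) * Complex.I_mul_I
    ext
    · simp only [Prod.fst_add, Prod.smul_fst, smul_smul, hI]
      module
    · simp only [Prod.snd_add, Prod.smul_snd, star_smul, star_add, star_sub, star_star, smul_smul,
        hI', star_inv₀, star_ofNat]
      module
  · calc ‖(2⁻¹ : ℂ) • (p.1 + star p.2)‖ ≤ 2⁻¹ * (‖p.1‖ + ‖p.2‖) := by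
          rw [norm_smul, norm_inv, Complex.norm_ofNat, ← norm_star p.2]
          gcongr
          exact norm_add_le _ _
      _ ≤ ‖p‖ := by linarith [norm_fst_le p, norm_snd_le p]

-- Write `p = a + I • b` with `a` and `b` antidiagonal: `K` vanishes at `a + t • b` for small real
-- `t`, hence along the whole complex line through `a` and `p`.
theorem eventually_eq_zero_of_antidiagonal [CompleteSpace F] {K : E × E → F}
    (hK : ∀ᶠ p in 𝓝 0, DifferentiableAt ℂ K p) (h : ∀ᶠ z in 𝓝 0, K (z, star z) = 0) :
    ∀ᶠ p in 𝓝 0, K p = 0 := by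
  obtain ⟨r, hr, hKr⟩ := Metric.eventually_nhds_iff_ball.1 hK
  obtain ⟨s, hs, hKs⟩ := Metric.eventually_nhds_iff_ball.1 h
  filter_upwards [Metric.ball_mem_nhds 0 (lt_min hr hs)] with p hp
  rw [mem_ball_zero_iff, lt_min_iff] at hp
  obtain ⟨x, y, hxy, hxp⟩ := exists_eq_antidiagonal_add_I_smul p
  let ℓ (t : ℂ) : E × E := t • (y, star y) + (x, star x)
  have hℓI : ℓ Complex.I = p := by rw [hxy, add_comm]
  have hℓ0 : ℓ 0 ∈ Metric.ball 0 r := by simpa [ℓ] using hxp.trans_lt hp.1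
  have hℓ_real : ∀ᶠ t : ℝ in 𝓝 0, K (ℓ t) = 0 := by
    have hx : ∀ᶠ t : ℝ in 𝓝 0, (t : ℂ) • y + x ∈ Metric.ball 0 s :=
      ContinuousAt.eventually_mem (by fun_prop)
        (Metric.isOpen_ball.mem_nhds (by simpa using hxp.trans_lt hp.2))
    filter_upwards [hx] with t ht
    simpa [ℓ] using hKs _ ht
  have hconn : IsPreconnected (ℓ ⁻¹' Metric.ball 0 r) :=
    (((convex_ball 0 r).translate_preimage_left (x, star x)).linear_preimage
      ((LinearMap.toSpanSingleton ℂ (E × E) (y, star y)).restrictScalars ℝ)).isPreconnected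
  have hℓ_analytic : AnalyticOnNhd ℂ (fun t => K (ℓ t)) (ℓ ⁻¹' Metric.ball 0 r) := by
    refine DifferentiableOn.analyticOnNhd (fun t ht => ?_)
      (Metric.isOpen_ball.preimage (by fun_prop))
    exact ((hKr _ ht).comp t (by fun_prop)).differentiableWithinAt
  have hofReal : Tendsto Complex.ofRealCLM (𝓝[≠] 0) (𝓝[≠] 0) := by
    simpa using Complex.ofRealCLM.hasDerivAt.tendsto_nhdsNE (x := 0) (by simp)
  have hℓ_zero := hℓ_analytic.eqOn_zero_of_preconnected_of_frequently_eq_zero hconn hℓ0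
    (hofReal.frequently (hℓ_real.filter_mono nhdsWithin_le_nhds).frequently)
  have hpr : ℓ Complex.I ∈ Metric.ball 0 r := by simpa [hℓI] using hp.1
  simpa [hℓI] using hℓ_zero hpr

end Antidiagonal

section ConjugateFunction

variable {E : Type*} [NormedAddCommGroup E] [NormedSpace ℂ E] [StarAddMonoid E] [StarModule ℂ E]

theorem eventually_differentiableAt_star_comp_star [ContinuousStar E] {f : E → ℂ}
    (hf : AnalyticAt ℂ f 0) : ∀ᶠ w in 𝓝 0, DifferentiableAt ℂ (fun w => star (f (star w))) w := by
  have hstar : Tendsto (star : E → E) (𝓝 0) (𝓝 0) := continuous_star.tendsto' _ _ (star_zero E)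
  filter_upwards [hstar.eventually hf.eventually_analyticAt] with w hw
  exact star_star w ▸ hw.differentiableAt.star_star

theorem analyticAt_star_comp_star_smul [ContinuousStar E] {f : E → ℂ} (hf : AnalyticAt ℂ f 0)
    (w : E) : AnalyticAt ℂ (fun s : ℂ => star (f (star (s • w)))) 0 := by
  rw [Complex.analyticAt_iff_eventually_differentiableAt]
  have hline : Tendsto (fun s : ℂ => s • w) (𝓝 0) (𝓝 0) :=
    Continuous.tendsto' (by fun_prop) _ _ (by simp)
  filter_upwards [hline.eventually (eventually_differentiableAt_star_comp_star hf)] with s hs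
  exact DifferentiableAt.comp (f := fun s : ℂ => s • w) s hs (by fun_prop)

theorem eventually_add_star_eq_two_mul [NormedStarGroup E] {f : E → ℂ} {G : E × E → ℂ}
    (hf : AnalyticAt ℂ f 0) (hG : AnalyticAt ℂ G 0)
    (h : ∀ᶠ z in 𝓝 0, ((f z).re : ℂ) = G (z, star z)) :
    ∀ᶠ p in 𝓝 (0 : E × E), f p.1 + star (f (star p.2)) = 2 * G p := by
  suffices ∀ᶠ p in 𝓝 (0 : E × E), f p.1 + star (f (star p.2)) - 2 * G p = 0 from
    this.mono fun p hp => sub_eq_zero.1 hp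
  refine eventually_eq_zero_of_antidiagonal ?_ ?_
  · filter_upwards [(continuous_fst.tendsto' (0 : E × E) 0 rfl).eventually hf.eventually_analyticAt,
      (continuous_snd.tendsto' (0 : E × E) 0 rfl).eventually
        (eventually_differentiableAt_star_comp_star hf),
      hG.eventually_analyticAt] with p hfp hfp' hGp
    exact ((hfp.differentiableAt.comp p differentiableAt_fst).add
      (hfp'.comp p differentiableAt_snd)).sub (hGp.differentiableAt.const_mul 2)
  · filter_upwards [h] with z hz
    rw [star_star, ← hz, ← starRingEnd_apply, Complex.add_conj, Complex.ofReal_mul,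
      Complex.ofReal_ofNat, sub_self]

end ConjugateFunction

section RealAndImaginaryParts

variable {ι : Type*} [Fintype ι] {f : (ι → ℂ) → ℂ} {g h : (ι → ℂ) → ℝ}

theorem isProperPowerAt_of_re_eq_mul (hf : AnalyticAt ℂ f 0) (hf0 : f 0 = 0)
    (hfne : ∃ᶠ z in 𝓝 0, f z ≠ 0) (hg : AnalyticAt ℝ g 0) (hh : AnalyticAt ℝ h 0) (hg0 : g 0 = 0)
    (hh0 : h 0 = 0) (hgh : ∀ᶠ z in 𝓝 0, (f z).re = g z * h z) : IsProperPowerAt f 0 := by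
  obtain ⟨G, hG, hGg⟩ := exists_polarization hg
  obtain ⟨H, hH, hHh⟩ := exists_polarization hh
  have hpolar : ∀ᶠ p in 𝓝 0, f p.1 + star (f (star p.2)) = 2 * (G p * H p) := by
    refine eventually_add_star_eq_two_mul hf (hG.fun_mul hH) ?_
    filter_upwards [hgh, hGg, hHh] with z hz hGz hHz
    rw [hz, hGz, hHz, Complex.ofReal_mul]
  obtain ⟨v, hv⟩ := exists_eventually_ne_zero_on_line hf hfne
  let slice (y : (ι → ℂ) × ℂ) : (ι → ℂ) × (ι → ℂ) := (y.1, y.2 • star v)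
  have hslice : AnalyticAt ℂ slice (0, 0) :=
    analyticAt_fst.prod (analyticAt_snd.smul analyticAt_const)
  have hslice₀ : slice (0, 0) = 0 := by simp [slice]
  have hκne : ∃ᶠ s : ℂ in 𝓝 0, star (f (star (s • star v))) ≠ 0 := by
    have hstar : Tendsto (star : ℂ → ℂ) (𝓝 0) (𝓝 0) := continuous_star.tendsto' _ _ (star_zero ℂ)
    refine hstar.frequently ((hv.frequently.filter_mono nhdsWithin_le_nhds).mono fun t ht => ?_)
    simpa using ht
  refine isProperPowerAt_of_mul_eq_add (G := fun y => 2 * G (slice y)) (H := fun y => H (slice y))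
    hf hf0 hfne (analyticAt_star_comp_star_smul hf _) (by simp [hf0]) hκne
    (analyticAt_const.mul (hG.comp_of_eq hslice hslice₀)) (hH.comp_of_eq hslice hslice₀) ?_ ?_ ?_
  · simpa [slice, hg0] using hGg.self_of_nhds
  · simpa [slice, hh0] using hHh.self_of_nhds
  · have hslice_tendsto : Tendsto slice (𝓝 (0, 0)) (𝓝 0) := by
      simpa only [hslice₀] using hslice.continuousAt.tendsto
    filter_upwards [hslice_tendsto.eventually hpolar] with y hy
    rw [hy, mul_assoc]

theorem isProperPowerAt_of_im_eq_mul (hf : AnalyticAt ℂ f 0) (hf0 : f 0 = 0)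
    (hfne : ∃ᶠ z in 𝓝 0, f z ≠ 0) (hg : AnalyticAt ℝ g 0) (hh : AnalyticAt ℝ h 0) (hg0 : g 0 = 0)
    (hh0 : h 0 = 0) (hgh : ∀ᶠ z in 𝓝 0, (f z).im = g z * h z) : IsProperPowerAt f 0 := by
  refine IsProperPowerAt.of_const_mul (neg_ne_zero.2 Complex.I_ne_zero) ?_
  refine isProperPowerAt_of_re_eq_mul (analyticAt_const.mul hf) (by simp [hf0])
    (hfne.mono fun z hz => by simpa using hz) hg hh hg0 hh0 ?_
  filter_upwards [hgh] with z hz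
  simpa using hz

end RealAndImaginaryParts

/-- **Lemma (Cerveau–Lins Neto).** If `f ∈ O_n` is a nonzero holomorphic germ with
`f(0) = 0` which is not a power in `O_n`, then `Re(f)` and `Im(f)` are irreducible in
the ring of germs at `0` of real-valued real-analytic functions. -/
theorem stmt_8 (n : ℕ) (hn : 0 < n) (f : (Fin n → ℂ) → ℂ)
    (hf : AnalyticAt ℂ f 0) (hf0 : f 0 = 0)
    -- `f ≠ 0` as a germ
    (hfne : ¬ ∀ᶠ z in 𝓝 (0 : Fin n → ℂ), f z = 0)
    -- `f` is not a power in `O_n`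
    (hpow : ¬ ∃ (g : (Fin n → ℂ) → ℂ) (k : ℕ), AnalyticAt ℂ g 0 ∧ 2 ≤ k ∧
      ∀ᶠ z in 𝓝 (0 : Fin n → ℂ), f z = g z ^ k) :
    -- `Re(f)` is irreducible in `A_{nℝ}`
    (∀ g h : (Fin n → ℂ) → ℝ, AnalyticAt ℝ g 0 → AnalyticAt ℝ h 0 →
      (∀ᶠ z in 𝓝 (0 : Fin n → ℂ), (f z).re = g z * h z) → g 0 ≠ 0 ∨ h 0 ≠ 0) ∧
    -- `Im(f)` is irreducible in `A_{nℝ}`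
    (∀ g h : (Fin n → ℂ) → ℝ, AnalyticAt ℝ g 0 → AnalyticAt ℝ h 0 →
      (∀ᶠ z in 𝓝 (0 : Fin n → ℂ), (f z).im = g z * h z) → g 0 ≠ 0 ∨ h 0 ≠ 0) := by
  refine ⟨fun g h hg hh hgh => ?_, fun g h hg hh hgh => ?_⟩ <;>
    by_contra! hgh0
  · exact hpow (isProperPowerAt_of_re_eq_mul hf hf0 (not_eventually.1 hfne) hg hh hgh0.1 hgh0.2 hgh)
  · exact hpow (isProperPowerAt_of_im_eq_mul hf hf0 (not_eventually.1 hfne) hg hh hgh0.1 hgh0.2 hgh)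
end

section
/- Let f ∈ ℂ[z₁, z₂] be a nonzero quasihomogeneous polynomial with f(0) = 0 (quasihomogeneous of some type (w₁,w₂) with positive integer weights). Then f factors, uniquely up to reordering of the factors, as f(z₁, z₂) = μ · z₁^m · z₂^n · Π_{ℓ=1}^{k} (z₂^p − λ_ℓ z₁^q), where m, n, k are nonnegative integers, p, q are positive integers with gcd(p, q) = 1, μ ∈ ℂ*, and λ_ℓ ∈ ℂ* for each ℓ = 1, …, k. -/
open Filter Topology MvPolynomial

/-!
Existence. Dividing the weights by their gcd, we may take them to be coprime, say `(p, q)`. A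
quasihomogeneous `f` is determined by its degree and its dehomogenization `g(T) = f(1, T)`. Since
`p i + q j` is constant on the exponents `(i, j)` of `f`, the exponents of `g` are congruent
modulo `p`, so `g = T^n Q(T^p)` with `Q(0) ≠ 0`, and splitting `Q` into linear factors gives
`g = μ T^n ∏ (T^p - λ)`. If `m` is the exponent of `z₁` in the monomial of `f` with the highest
power of `z₂`, then `μ z₁^m z₂^n ∏ (z₂^p - λ z₁^q)` has the same degree and dehomogenization as `f`.

Uniqueness. The dehomogenization determines `n`, `μ` and `p k`, where `k` is the number of binomial
factors. Exchanging the variables turns a factorization into one with `(m, p)` and `(n, q)`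
exchanged, so `m` and `q k` are determined as well. Coprimality then gives
`k = gcd (p k, q k)`, and the `λ` are the roots of `Q`.
-/

section Univariate

variable {R : Type*} [CommRing R]

/-- The polynomial `μ T^n ∏ (T^p - λ)`, the product running over the multiset `lam`: the shape that
`factoredForm` takes on the line `z₁ = 1`. -/
noncomputable def univariateFactoredForm (n p : ℕ) (μ : R) (lam : Multiset R) : Polynomial R :=
  .C μ * .X ^ n * (lam.map fun l => .X ^ p - .C l).prod

theorem univariateFactoredForm_eq_expand (n p : ℕ) (μ : R) (lam : Multiset R) :
    univariateFactoredForm n p μ lam =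
      .C μ * .X ^ n * .expand R p (lam.map fun l => .X - .C l).prod := by
  simp [univariateFactoredForm, map_multiset_prod]

theorem monic_prod_X_pow_sub_C {p : ℕ} (hp : 0 < p) (lam : Multiset R) :
    (lam.map fun l => (.X ^ p - .C l : Polynomial R)).prod.Monic :=
  Polynomial.monic_multiset_prod_of_monic _ _ fun l _ => Polynomial.monic_X_pow_sub_C l hp.ne'

theorem coeff_zero_prod_X_pow_sub_C_ne_zero [IsDomain R] {p : ℕ} (hp : 0 < p) {lam : Multiset R}
    (hlam : ∀ l ∈ lam, l ≠ 0) :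
    (lam.map fun l => (.X ^ p - .C l : Polynomial R)).prod.coeff 0 ≠ 0 := by
  rw [Polynomial.coeff_zero_eq_eval_zero, Polynomial.eval_multiset_prod]
  simpa [Multiset.prod_eq_zero_iff, hp.ne'] using fun h => hlam 0 h rfl

theorem leadingCoeff_univariateFactoredForm (n : ℕ) {p : ℕ} (hp : 0 < p) (μ : R)
    (lam : Multiset R) : (univariateFactoredForm n p μ lam).leadingCoeff = μ := by
  rw [univariateFactoredForm, Polynomial.leadingCoeff_mul_monic (monic_prod_X_pow_sub_C hp lam),
    Polynomial.leadingCoeff_mul_X_pow, Polynomial.leadingCoeff_C]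

theorem natDegree_univariateFactoredForm (n : ℕ) {p : ℕ} (hp : 0 < p) {μ : R} (hμ : μ ≠ 0)
    (lam : Multiset R) : (univariateFactoredForm n p μ lam).natDegree = n + lam.card * p := by
  have : Nontrivial R := nontrivial_of_ne μ 0 hμ
  rw [univariateFactoredForm, mul_comm, (monic_prod_X_pow_sub_C hp lam).natDegree_mul'
    (by simpa [Polynomial.C_mul_X_pow_eq_monomial]), add_comm,
    Polynomial.natDegree_C_mul_X_pow _ _ hμ, Polynomial.natDegree_multiset_prod_of_monic]
  · simp
  · simpa using fun l _ => Polynomial.monic_X_pow_sub_C l hp.ne'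

theorem natTrailingDegree_univariateFactoredForm [IsDomain R] (n : ℕ) {p : ℕ} (hp : 0 < p) {μ : R}
    (hμ : μ ≠ 0) {lam : Multiset R} (hlam : ∀ l ∈ lam, l ≠ 0) :
    (univariateFactoredForm n p μ lam).natTrailingDegree = n := by
  rw [univariateFactoredForm, Polynomial.natTrailingDegree_mul (by simp [hμ])
    (monic_prod_X_pow_sub_C hp lam).ne_zero, Polynomial.natTrailingDegree_eq_zero.2
    (.inr (coeff_zero_prod_X_pow_sub_C_ne_zero hp hlam)), Polynomial.C_mul_X_pow_eq_monomial,
    Polynomial.natTrailingDegree_monomial hμ, add_zero]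

theorem univariateFactoredForm_injective [IsDomain R] (n : ℕ) {p : ℕ} (hp : 0 < p) {μ : R}
    (hμ : μ ≠ 0) : Function.Injective (univariateFactoredForm n p μ) := fun lam lam' h => by
  have hC : (.C μ * .X ^ n : Polynomial R) ≠ 0 := by simp [hμ]
  simp only [univariateFactoredForm_eq_expand] at h
  simpa using
    congrArg Polynomial.roots (Polynomial.expand_injective hp (mul_left_cancel₀ hC h))

theorem exponent_coeff_card_mul_eq_of_univariateFactoredForm_eq [IsDomain R] {n p n' p' : ℕ}
    {μ μ' : R} {lam lam' : Multiset R} (hp : 0 < p) (hμ : μ ≠ 0) (hlam : ∀ l ∈ lam, l ≠ 0)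
    (hp' : 0 < p') (hμ' : μ' ≠ 0) (hlam' : ∀ l ∈ lam', l ≠ 0)
    (h : univariateFactoredForm n' p' μ' lam' = univariateFactoredForm n p μ lam) :
    n' = n ∧ μ' = μ ∧ lam'.card * p' = lam.card * p := by
  have hn : n' = n := by
    rw [← natTrailingDegree_univariateFactoredForm n' hp' hμ' hlam', h,
      natTrailingDegree_univariateFactoredForm n hp hμ hlam]
  have hleading : μ' = μ := by
    rw [← leadingCoeff_univariateFactoredForm n' hp' μ' lam', h,
      leadingCoeff_univariateFactoredForm n hp]
  have hdegree : n' + lam'.card * p' = n + lam.card * p := by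
    rw [← natDegree_univariateFactoredForm n' hp' hμ', h,
      natDegree_univariateFactoredForm n hp hμ]
  exact ⟨hn, hleading, by omega⟩

theorem expand_contract_of_dvd {S : Type*} [CommSemiring S] {p : ℕ} (hp : 0 < p)
    {P : Polynomial S} (hP : ∀ i, P.coeff i ≠ 0 → p ∣ i) : .expand S p (P.contract p) = P := by
  ext i
  rw [Polynomial.coeff_expand hp]
  split_ifs with hi
  · rw [Polynomial.coeff_contract hp.ne', Nat.div_mul_cancel hi]
  · exact (not_imp_comm.1 (hP i) hi).symm

theorem exists_eq_X_pow_mul_expand {P : Polynomial R} (hP : P ≠ 0) {p : ℕ} (hp : 0 < p)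
    (hmod : ∀ i j, P.coeff i ≠ 0 → P.coeff j ≠ 0 → i ≡ j [MOD p]) :
    ∃ (n : ℕ) (Q : Polynomial R), Q.coeff 0 ≠ 0 ∧ P = .X ^ n * .expand R p Q := by
  obtain ⟨S, hPS, hS⟩ := P.exists_eq_pow_rootMultiplicity_mul_and_not_dvd hP 0
  generalize P.rootMultiplicity 0 = n at hPS
  rw [Polynomial.C_0, sub_zero] at hPS hS
  rw [Polynomial.X_dvd_iff] at hS
  have hcoeff (i : ℕ) : P.coeff (i + n) = S.coeff i := by rw [hPS, Polynomial.coeff_X_pow_mul]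
  have hdvd (i : ℕ) (hi : S.coeff i ≠ 0) : p ∣ i := by
    have h := hmod (i + n) (0 + n) (by rwa [hcoeff]) (by rwa [hcoeff])
    exact Nat.modEq_zero_iff_dvd.1 (h.add_right_cancel' n)
  refine ⟨n, S.contract p, ?_, ?_⟩
  · rwa [Polynomial.coeff_contract hp.ne', zero_mul]
  · rw [expand_contract_of_dvd hp hdvd, hPS]

theorem exists_eq_univariateFactoredForm {K : Type*} [Field K] [IsAlgClosed K] {P : Polynomial K}
    (hP : P ≠ 0) {p : ℕ} (hp : 0 < p)
    (hmod : ∀ i j, P.coeff i ≠ 0 → P.coeff j ≠ 0 → i ≡ j [MOD p]) :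
    ∃ (n : ℕ) (μ : K) (lam : Multiset K),
      μ ≠ 0 ∧ (∀ l ∈ lam, l ≠ 0) ∧ P = univariateFactoredForm n p μ lam := by
  obtain ⟨n, Q, hQ, hPQ⟩ := exists_eq_X_pow_mul_expand hP hp hmod
  have hQ0 : Q ≠ 0 := fun h => hQ (by simp [h])
  refine ⟨n, Q.leadingCoeff, Q.roots, Polynomial.leadingCoeff_ne_zero.2 hQ0, ?_, ?_⟩
  · rintro l hl rfl
    exact hQ (by simpa [Polynomial.coeff_zero_eq_eval_zero] using Polynomial.isRoot_of_mem_roots hl)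
  · conv_lhs => rw [hPQ, (IsAlgClosed.splits Q).eq_prod_roots]
    rw [univariateFactoredForm_eq_expand, map_mul, Polynomial.expand_C]
    ring

end Univariate

section Dehomogenization

variable {R : Type*} [CommSemiring R]

/-- The dehomogenization `f(1, T)` of a polynomial `f(z₁, z₂)`. -/
noncomputable def dehomogenize : MvPolynomial (Fin 2) R →ₐ[R] Polynomial R :=
  aeval ![1, .X]

theorem coeff_dehomogenize (f : MvPolynomial (Fin 2) R) (j : ℕ) :
    (dehomogenize f).coeff j = ∑ s ∈ f.support with s 1 = j, coeff s f := by
  simp [dehomogenize, aeval_def, eval₂_eq', Polynomial.finsetSum_coeff, Polynomial.coeff_X_pow,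
    Finset.sum_filter, eq_comm]

theorem weight_fin_two (w : Fin 2 → ℕ) (s : Fin 2 →₀ ℕ) :
    Finsupp.weight w s = s 0 * w 0 + s 1 * w 1 := by
  simp [Finsupp.weight_eq_sum]

variable {w : Fin 2 → ℕ} {d : ℕ} {f g : MvPolynomial (Fin 2) R}

theorem eq_of_weight_eq (hw : w 0 ≠ 0) {s t : Fin 2 →₀ ℕ}
    (hst : Finsupp.weight w s = Finsupp.weight w t) (h₁ : s 1 = t 1) : s = t := by
  rw [weight_fin_two, weight_fin_two, h₁, add_left_inj] at hst
  have h₀ : s 0 = t 0 := Nat.eq_of_mul_eq_mul_right (Nat.pos_of_ne_zero hw) hst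
  ext i
  fin_cases i <;> assumption

theorem coeff_dehomogenize_of_weight_eq (hw : w 0 ≠ 0) (hf : IsWeightedHomogeneous w f d)
    {s : Fin 2 →₀ ℕ} (hs : Finsupp.weight w s = d) :
    (dehomogenize f).coeff (s 1) = coeff s f := by
  rw [coeff_dehomogenize]
  refine Finset.sum_eq_single s (fun t ht hts => absurd ?_ hts) (fun h => ?_)
  · rw [Finset.mem_filter, mem_support_iff] at ht
    exact eq_of_weight_eq hw ((hf ht.1).trans hs.symm) ht.2
  · simpa using h

theorem eq_of_dehomogenize_eq (hw : w 0 ≠ 0) (hf : IsWeightedHomogeneous w f d)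
    (hg : IsWeightedHomogeneous w g d) (hfg : dehomogenize f = dehomogenize g) : f = g := by
  ext s
  by_cases hs : Finsupp.weight w s = d
  · rw [← coeff_dehomogenize_of_weight_eq hw hf hs, hfg,
      coeff_dehomogenize_of_weight_eq hw hg hs]
  · rw [hf.coeff_eq_zero s hs, hg.coeff_eq_zero s hs]

theorem exists_weight_eq_of_coeff_dehomogenize_ne_zero (hf : IsWeightedHomogeneous w f d) {j : ℕ}
    (hj : (dehomogenize f).coeff j ≠ 0) : ∃ i, i * w 0 + j * w 1 = d := by
  rw [coeff_dehomogenize] at hj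
  obtain ⟨s, hs, hsf⟩ := Finset.exists_ne_zero_of_sum_ne_zero hj
  exact ⟨s 0, by rw [← hf hsf, weight_fin_two, (Finset.mem_filter.1 hs).2]⟩

theorem modEq_of_coeff_dehomogenize_ne_zero (hw : (w 0).Coprime (w 1))
    (hf : IsWeightedHomogeneous w f d) {i j : ℕ} (hi : (dehomogenize f).coeff i ≠ 0)
    (hj : (dehomogenize f).coeff j ≠ 0) : i ≡ j [MOD w 0] := by
  obtain ⟨a, ha⟩ := exists_weight_eq_of_coeff_dehomogenize_ne_zero hf hi
  obtain ⟨b, hb⟩ := exists_weight_eq_of_coeff_dehomogenize_ne_zero hf hj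
  have h : a * w 0 + i * w 1 ≡ b * w 0 + j * w 1 [MOD w 0] := by rw [ha, hb]
  refine Nat.ModEq.cancel_right_of_coprime hw ?_
  simpa [Nat.ModEq] using h

end Dehomogenization

theorem exists_isWeightedHomogeneous_of_smul {σ R : Type*} [CommSemiring R] {w : σ → ℕ} {c d : ℕ}
    (hc : c ≠ 0) {f : MvPolynomial σ R} (hf : IsWeightedHomogeneous (c • w) f d) :
    ∃ e, IsWeightedHomogeneous w f e := by
  have hweight (s : σ →₀ ℕ) : Finsupp.weight (c • w) s = c * Finsupp.weight w s := by
    simp [Finsupp.weight_apply, Finsupp.sum, Finset.mul_sum, mul_left_comm]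
  refine ⟨d / c, fun s hs => ?_⟩
  rw [← hf hs, hweight, Nat.mul_div_cancel_left _ (Nat.pos_of_ne_zero hc)]

theorem isWeightedHomogeneous_multiset_prod {σ R ι : Type*} [CommSemiring R] {w : σ → ℕ} {d : ℕ}
    {φ : ι → MvPolynomial σ R} (hφ : ∀ i, IsWeightedHomogeneous w (φ i) d) (s : Multiset ι) :
    IsWeightedHomogeneous w (s.map φ).prod (s.card * d) := by
  induction s using Multiset.induction_on with
  | empty => simpa using isWeightedHomogeneous_one R w
  | cons i s ih =>
    simpa [add_mul, add_comm] using (hφ i).mul ih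

theorem isWeightedHomogeneous_fin_two_iff {R : Type*} [CommSemiring R] {w₁ w₂ d : ℕ}
    {f : MvPolynomial (Fin 2) R} :
    IsWeightedHomogeneous ![w₁, w₂] f d ↔ ∀ s ∈ f.support, w₁ * s 0 + w₂ * s 1 = d := by
  simp [IsWeightedHomogeneous, weight_fin_two, mul_comm]

theorem eq_of_mul_eq_mul_of_coprime {k p q k' p' q' : ℕ} (hpq : p.Coprime q) (hpq' : p'.Coprime q')
    (hp : k' * p' = k * p) (hq : k' * q' = k * q) : k' = k := by
  have h := congrArg₂ Nat.gcd hp hq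
  rwa [Nat.gcd_mul_left, Nat.gcd_mul_left, hpq, hpq', mul_one, mul_one] at h

section FactoredForm

variable {R : Type*} [CommRing R]

/-- The polynomial `μ z₁^m z₂^n ∏ (z₂^p - λ z₁^q)`, the product running over the multiset `lam`, so
that the order of the factors is immaterial. -/
noncomputable def factoredForm (m n p q : ℕ) (μ : R) (lam : Multiset R) :
    MvPolynomial (Fin 2) R :=
  C μ * X 0 ^ m * X 1 ^ n * (lam.map fun l => X 1 ^ p - C l * X 0 ^ q).prod

theorem eq_factoredForm_iff_eval [IsDomain R] [Infinite R] {m n p q : ℕ} {μ : R} {lam : Multiset R}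
    {f : MvPolynomial (Fin 2) R} :
    f = factoredForm m n p q μ lam ↔ ∀ z : Fin 2 → R,
      eval z f = μ * z 0 ^ m * z 1 ^ n * (lam.map fun l => z 1 ^ p - l * z 0 ^ q).prod := by
  simp [MvPolynomial.funext_iff, factoredForm, map_multiset_prod]

theorem dehomogenize_factoredForm (m n p q : ℕ) (μ : R) (lam : Multiset R) :
    dehomogenize (factoredForm m n p q μ lam) = univariateFactoredForm n p μ lam := by
  simp [dehomogenize, factoredForm, univariateFactoredForm, map_multiset_prod,
    Polynomial.algebraMap_eq]

theorem univariateFactoredForm_eq_of_factoredForm_eq {m n p q m' n' p' q' : ℕ} {μ μ' : R}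
    {lam lam' : Multiset R} (h : factoredForm m' n' p' q' μ' lam' = factoredForm m n p q μ lam) :
    univariateFactoredForm n' p' μ' lam' = univariateFactoredForm n p μ lam := by
  simpa only [dehomogenize_factoredForm] using congrArg dehomogenize h

theorem isWeightedHomogeneous_factoredForm (m n p q : ℕ) (μ : R) (lam : Multiset R) :
    IsWeightedHomogeneous ![p, q] (factoredForm m n p q μ lam)
      (m * p + n * q + lam.card * (p * q)) := by
  have hX (i : Fin 2) := isWeightedHomogeneous_X R ![p, q] i
  have hbinomial (l : R) :
      IsWeightedHomogeneous ![p, q] (X 1 ^ p - C l * X 0 ^ q : MvPolynomial (Fin 2) R) (p * q) := by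
    refine IsWeightedHomogeneous.sub (by simpa using (hX 1).pow p) ?_
    simpa [mul_comm] using ((hX 0).pow q).C_mul l
  simpa [factoredForm] using ((((hX 0).pow m).C_mul μ).mul ((hX 1).pow n)).mul
    (isWeightedHomogeneous_multiset_prod hbinomial lam)

variable {K : Type*} [Field K]

theorem rename_swap_factoredForm (m n p q : ℕ) (μ : K) {lam : Multiset K}
    (hlam : ∀ l ∈ lam, l ≠ 0) :
    rename (Equiv.swap 0 1) (factoredForm m n p q μ lam) =
      factoredForm n m q p (μ * (lam.map (-·)).prod) (lam.map (·⁻¹)) := by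
  have hfactor : ∀ l ∈ lam, (X 0 ^ p - C l * X 1 ^ q : MvPolynomial (Fin 2) K) =
      C (-l) * (X 1 ^ q - C l⁻¹ * X 0 ^ p) := fun l hl => by
    rw [mul_sub, ← mul_assoc, ← C_mul, neg_mul, mul_inv_cancel₀ (hlam l hl)]
    simp only [map_neg, map_one]
    ring
  simp only [factoredForm, map_mul, map_pow, map_multiset_prod, Multiset.map_map,
    Function.comp_def, map_sub, rename_X, rename_C, Equiv.swap_apply_left, Equiv.swap_apply_right]
  rw [Multiset.map_congr rfl hfactor, Multiset.prod_map_mul]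
  ring

section Uniqueness

variable {m n p q m' n' p' q' : ℕ} {μ μ' : K} {lam lam' : Multiset K}

theorem left_exponent_card_mul_eq_of_factoredForm_eq (hq : 0 < q) (hμ : μ ≠ 0)
    (hlam : ∀ l ∈ lam, l ≠ 0) (hq' : 0 < q') (hμ' : μ' ≠ 0) (hlam' : ∀ l ∈ lam', l ≠ 0)
    (h : factoredForm m' n' p' q' μ' lam' = factoredForm m n p q μ lam) :
    m' = m ∧ lam'.card * q' = lam.card * q := by
  have hcoeff {ν : K} {s : Multiset K} (hν : ν ≠ 0) (hs : ∀ l ∈ s, l ≠ 0) :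
      ν * (s.map (-·)).prod ≠ 0 :=
    mul_ne_zero hν (Multiset.prod_ne_zero (by simpa using fun h0 => hs 0 h0 rfl))
  have hinv {s : Multiset K} (hs : ∀ l ∈ s, l ≠ 0) : ∀ l ∈ s.map (·⁻¹), l ≠ 0 := by
    simpa using hs
  have hswap := congrArg (rename (Equiv.swap 0 1)) h
  rw [rename_swap_factoredForm _ _ _ _ _ hlam, rename_swap_factoredForm _ _ _ _ _ hlam'] at hswap
  obtain ⟨hm, -, hcard⟩ := exponent_coeff_card_mul_eq_of_univariateFactoredForm_eq hq
    (hcoeff hμ hlam) (hinv hlam) hq' (hcoeff hμ' hlam') (hinv hlam')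
    (univariateFactoredForm_eq_of_factoredForm_eq hswap)
  exact ⟨hm, by simpa only [Multiset.card_map] using hcard⟩

theorem factoredForm_unique (hp : 0 < p) (hq : 0 < q) (hpq : p.Coprime q) (hμ : μ ≠ 0)
    (hlam : ∀ l ∈ lam, l ≠ 0) (hp' : 0 < p') (hq' : 0 < q') (hpq' : p'.Coprime q') (hμ' : μ' ≠ 0)
    (hlam' : ∀ l ∈ lam', l ≠ 0)
    (h : factoredForm m' n' p' q' μ' lam' = factoredForm m n p q μ lam) :
    m' = m ∧ n' = n ∧ μ' = μ ∧ lam' = lam ∧ (lam ≠ 0 → p' = p ∧ q' = q) := by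
  have hdehom := univariateFactoredForm_eq_of_factoredForm_eq h
  obtain ⟨rfl, rfl, hkp⟩ :=
    exponent_coeff_card_mul_eq_of_univariateFactoredForm_eq hp hμ hlam hp' hμ' hlam' hdehom
  obtain ⟨rfl, hkq⟩ := left_exponent_card_mul_eq_of_factoredForm_eq hq hμ hlam hq' hμ' hlam' h
  have hcard : lam'.card = lam.card := eq_of_mul_eq_mul_of_coprime hpq hpq' hkp hkq
  refine ⟨rfl, rfl, rfl, ?_⟩
  rcases eq_or_ne lam 0 with rfl | hne
  · exact ⟨Multiset.card_eq_zero.1 hcard, fun h0 => absurd rfl h0⟩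
  · rw [hcard] at hkp hkq
    have hpos : 0 < lam.card := Multiset.card_pos.2 hne
    obtain rfl : p' = p := Nat.eq_of_mul_eq_mul_left hpos hkp
    obtain rfl : q' = q := Nat.eq_of_mul_eq_mul_left hpos hkq
    exact ⟨univariateFactoredForm_injective n' hp hμ hdehom, fun _ => ⟨rfl, rfl⟩⟩

end Uniqueness

section Existence

variable [IsAlgClosed K] {f : MvPolynomial (Fin 2) K} {d : ℕ}

theorem exists_eq_factoredForm_of_coprime {p q : ℕ} (hp : 0 < p) (hpq : p.Coprime q) (hf : f ≠ 0)
    (hfd : IsWeightedHomogeneous ![p, q] f d) :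
    ∃ (m n : ℕ) (μ : K) (lam : Multiset K),
      μ ≠ 0 ∧ (∀ l ∈ lam, l ≠ 0) ∧ f = factoredForm m n p q μ lam := by
  have hg : dehomogenize f ≠ 0 := fun h =>
    hf (eq_of_dehomogenize_eq hp.ne' hfd (isWeightedHomogeneous_zero K _ d) (by rw [h, map_zero]))
  obtain ⟨n, μ, lam, hμ, hlam, hdehom⟩ := exists_eq_univariateFactoredForm hg hp
    fun i j => modEq_of_coeff_dehomogenize_ne_zero hpq hfd
  obtain ⟨m, hm⟩ : ∃ m, m * p + (n + lam.card * p) * q = d := by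
    refine exists_weight_eq_of_coeff_dehomogenize_ne_zero hfd ?_
    rw [← natDegree_univariateFactoredForm n hp hμ lam, ← hdehom]
    exact Polynomial.leadingCoeff_ne_zero.2 hg
  have hd : m * p + n * q + lam.card * (p * q) = d := by rw [← hm]; ring
  refine ⟨m, n, μ, lam, hμ, hlam, eq_of_dehomogenize_eq hp.ne' hfd ?_ ?_⟩
  · exact hd ▸ isWeightedHomogeneous_factoredForm m n p q μ lam
  · rw [hdehom, dehomogenize_factoredForm]

theorem exists_eq_factoredForm {w₁ w₂ : ℕ} (hw₁ : 0 < w₁) (hw₂ : 0 < w₂) (hf : f ≠ 0)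
    (hfd : IsWeightedHomogeneous ![w₁, w₂] f d) :
    ∃ (m n p q : ℕ) (μ : K) (lam : Multiset K),
      0 < p ∧ 0 < q ∧ p.Coprime q ∧ μ ≠ 0 ∧ (∀ l ∈ lam, l ≠ 0) ∧
        f = factoredForm m n p q μ lam := by
  obtain ⟨g, p, q, hg, hpq, rfl, rfl⟩ := Nat.exists_coprime' (Nat.gcd_pos_of_pos_left w₂ hw₁)
  have hp : 0 < p := Nat.pos_of_mul_pos_right hw₁
  have hq : 0 < q := Nat.pos_of_mul_pos_right hw₂
  have hsmul : ![p * g, q * g] = g • ![p, q] := by simp [mul_comm]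
  obtain ⟨e, hfe⟩ := exists_isWeightedHomogeneous_of_smul hg.ne' (hsmul ▸ hfd)
  obtain ⟨m, n, μ, lam, hμ, hlam, h⟩ := exists_eq_factoredForm_of_coprime hp hpq hf hfe
  exact ⟨m, n, p, q, μ, lam, hp, hq, hpq, hμ, hlam, h⟩

end Existence

end FactoredForm

theorem stmt_9_general {K : Type*} [Field K] [IsAlgClosed K] {w₁ w₂ d : ℕ} (hw₁ : 0 < w₁)
    (hw₂ : 0 < w₂) {f : MvPolynomial (Fin 2) K} (hf : f ≠ 0)
    (hfd : IsWeightedHomogeneous ![w₁, w₂] f d) :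
    ∃ (m n p q : ℕ) (μ : K) (lam : Multiset K),
      0 < p ∧ 0 < q ∧ Nat.gcd p q = 1 ∧ μ ≠ 0 ∧ (∀ l ∈ lam, l ≠ 0) ∧
      f = factoredForm m n p q μ lam ∧
      ∀ (m' n' p' q' : ℕ) (μ' : K) (lam' : Multiset K),
        0 < p' → 0 < q' → Nat.gcd p' q' = 1 → μ' ≠ 0 → (∀ l ∈ lam', l ≠ 0) →
        f = factoredForm m' n' p' q' μ' lam' →
        m' = m ∧ n' = n ∧ μ' = μ ∧ lam' = lam ∧ (lam ≠ 0 → p' = p ∧ q' = q) := by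
  obtain ⟨m, n, p, q, μ, lam, hp, hq, hpq, hμ, hlam, rfl⟩ := exists_eq_factoredForm hw₁ hw₂ hf hfd
  exact ⟨m, n, p, q, μ, lam, hp, hq, hpq, hμ, hlam, rfl,
    fun m' n' p' q' μ' lam' hp' hq' hpq' hμ' hlam' h =>
      factoredForm_unique hp hq hpq hμ hlam hp' hq' hpq' hμ' hlam' h.symm⟩

/-- **Lemma (Saito).** A nonzero quasihomogeneous polynomial `f ∈ ℂ[z₁,z₂]` with
`f(0) = 0` factors, uniquely up to reordering of the factors, as
`f = μ z₁^m z₂^n Π_{ℓ=1}^k (z₂^p − λ_ℓ z₁^q)` with `gcd(p,q) = 1` and `μ, λ_ℓ ∈ ℂ*`.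
The multiset `lam` records the `λ_ℓ`'s, so multiset equality is equality up to
reordering. -/
theorem stmt_9 (w₁ w₂ d : ℕ) (hw₁ : 0 < w₁) (hw₂ : 0 < w₂)
    (f : MvPolynomial (Fin 2) ℂ) (hf : f ≠ 0) (hf0 : constantCoeff f = 0)
    -- `f` is quasihomogeneous of type `(w₁,w₂)` and quasihomogeneous degree `d`
    (hqh : ∀ m ∈ f.support, w₁ * m 0 + w₂ * m 1 = d) :
    ∃ (m n p q : ℕ) (μ : ℂ) (lam : Multiset ℂ),
      0 < p ∧ 0 < q ∧ Nat.gcd p q = 1 ∧ μ ≠ 0 ∧ (∀ l ∈ lam, l ≠ 0) ∧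
      (∀ z : Fin 2 → ℂ,
        eval z f = μ * z 0 ^ m * z 1 ^ n * ((lam.map fun l => z 1 ^ p - l * z 0 ^ q)).prod) ∧
      -- uniqueness, up to reordering of the factors
      (∀ (m' n' p' q' : ℕ) (μ' : ℂ) (lam' : Multiset ℂ),
        0 < p' → 0 < q' → Nat.gcd p' q' = 1 → μ' ≠ 0 → (∀ l ∈ lam', l ≠ 0) →
        (∀ z : Fin 2 → ℂ,
          eval z f = μ' * z 0 ^ m' * z 1 ^ n' *
            ((lam'.map fun l => z 1 ^ p' - l * z 0 ^ q')).prod) →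
        m' = m ∧ n' = n ∧ μ' = μ ∧ lam' = lam ∧ (lam ≠ 0 → p' = p ∧ q' = q)) := by
  simpa only [eq_factoredForm_iff_eval] using
    stmt_9_general hw₁ hw₂ hf (isWeightedHomogeneous_fin_two_iff.2 hqh)
end

section
/- Let Q ∈ ℂ[z₁, z₂] be a quasihomogeneous polynomial of type (a,b) with gcd(a,b) = 1 and quasihomogeneous degree d, having an isolated singularity at 0 ∈ ℂ². Then Q factors as Q(z₁, z₂) = μ · z₁^m · z₂^n · Π_{ℓ=1}^{k} (z₂^a − λ_ℓ z₁^b), where m ≤ 1 and n ≤ 1 are nonnegative integers, μ ∈ ℂ*, and λ₁, …, λ_k ∈ ℂ* are pairwise distinct; in particular, in the Saito factorization of Q the exponents p, q satisfy p = a and q = b. -/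
open Filter Topology MvPolynomial

/-!
All exponents `(i, j)` of `Q` lie on the line `a i + b j = d`. As `gcd(a, b) = 1`, lattice points
on this line differ by multiples of `(b, -a)`, so once the largest monomial `z₁^m z₂^n` dividing
`Q` is removed, what remains is a binary form in `u = z₂^a`, `v = z₁^b` whose two extreme
coefficients are nonzero. Over an algebraically closed field such a form is a product of linear
factors `u - λ v` with `λ ≠ 0`.

If the square of a polynomial `F` divides `Q`, then all partial derivatives of `Q` vanish on
`F = 0`. For each factor `F = z₁, z₂, z₂^a - λ z₁^b` this zero set contains a curve
`t ↦ (α t^a, β t^b)` through the origin, so an isolated singularity excludes repeated factors.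
-/

section RepeatedFactors

theorem eval_pderiv_eq_zero_of_sq_dvd {σ R : Type*} [CommSemiring R] {Q F : MvPolynomial σ R}
    (hFQ : F ^ 2 ∣ Q) {z : σ → R} (hz : eval z F = 0) (i : σ) : eval z (pderiv i Q) = 0 := by
  obtain ⟨G, rfl⟩ := hFQ
  simp [Derivation.leibniz, Derivation.leibniz_pow, hz]

theorem not_sq_dvd_of_frequently_eval_eq_zero {σ R : Type*} [CommSemiring R] [TopologicalSpace R]
    {Q F : MvPolynomial σ R} {x : σ → R}
    (hQ : ∀ᶠ z in 𝓝 x, (∀ i, eval z (pderiv i Q) = 0) → z = x)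
    (hF : ∃ᶠ z in 𝓝[≠] x, eval z F = 0) : ¬ F ^ 2 ∣ Q := by
  intro hFQ
  obtain ⟨z, hz, hzx, hcrit⟩ :=
    (hF.and_eventually (eventually_mem_nhdsWithin.and (hQ.filter_mono nhdsWithin_le_nhds))).exists
  exact hzx (hcrit (eval_pderiv_eq_zero_of_sq_dvd hFQ hz))

theorem tendsto_weightedCurve_nhdsNE_zero {σ M : Type*} [MonoidWithZero M] [NoZeroDivisors M]
    [TopologicalSpace M] [ContinuousMul M] {w : σ → ℕ} (hw : ∀ i, w i ≠ 0) {c : σ → M}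
    (hc : c ≠ 0) : Tendsto (fun t i ↦ c i * t ^ w i) (𝓝[≠] (0 : M)) (𝓝[≠] (0 : σ → M)) := by
  refine tendsto_nhdsWithin_iff.mpr ⟨?_, ?_⟩
  · have hcont : Continuous fun (t : M) i ↦ c i * t ^ w i := by fun_prop
    have hzero : (fun i ↦ c i * (0 : M) ^ w i) = 0 := by ext i; simp [hw i]
    exact (hzero ▸ hcont.tendsto 0).mono_left nhdsWithin_le_nhds
  · obtain ⟨i, hi⟩ := Function.ne_iff.mp hc
    filter_upwards [self_mem_nhdsWithin] with t ht
    exact Function.ne_iff.mpr ⟨i, mul_ne_zero hi (pow_ne_zero _ ht)⟩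

theorem not_sq_dvd_of_forall_eval_weightedCurve_eq_zero {σ R : Type*} [CommSemiring R]
    [NoZeroDivisors R] [TopologicalSpace R] [ContinuousMul R] [(𝓝[≠] (0 : R)).NeBot]
    {Q F : MvPolynomial σ R} (hQ : ∀ᶠ z in 𝓝 0, (∀ i, eval z (pderiv i Q) = 0) → z = 0)
    {w : σ → ℕ} (hw : ∀ i, w i ≠ 0) {c : σ → R} (hc : c ≠ 0)
    (hF : ∀ t, eval (fun i ↦ c i * t ^ w i) F = 0) : ¬ F ^ 2 ∣ Q :=
  not_sq_dvd_of_frequently_eval_eq_zero hQ <|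
    (tendsto_weightedCurve_nhdsNE_zero hw hc).frequently (Frequently.of_forall hF)

theorem not_X_sq_dvd {σ R : Type*} [Nontrivial σ] [CommSemiring R] [Nontrivial R]
    [NoZeroDivisors R] [TopologicalSpace R] [ContinuousMul R] [(𝓝[≠] (0 : R)).NeBot]
    {Q : MvPolynomial σ R} (hQ : ∀ᶠ z in 𝓝 0, (∀ i, eval z (pderiv i Q) = 0) → z = 0) (i : σ) :
    ¬ X i ^ 2 ∣ Q := by
  classical
  obtain ⟨j, hji⟩ := exists_ne i
  exact not_sq_dvd_of_forall_eval_weightedCurve_eq_zero hQ (w := 1) (by simp)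
    (c := Pi.single j 1) (by simp) (by simp [hji.symm])

theorem sq_dvd_prod_of_ne_of_eq {ι M : Type*} [Fintype ι] [CommMonoid M] {f : ι → M} {i j : ι}
    (hij : i ≠ j) (hf : f i = f j) : f i ^ 2 ∣ ∏ l, f l := by
  classical
  calc f i ^ 2 = ∏ l ∈ {i, j}, f l := by rw [Finset.prod_pair hij, ← hf, sq]
    _ ∣ ∏ l, f l := Finset.prod_dvd_prod_of_subset _ _ _ (Finset.subset_univ _)

end RepeatedFactors

section BinaryForms

theorem exists_map_univ_val_eq {α : Type*} (s : Multiset α) :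
    ∃ f : Fin s.card → α, Finset.univ.val.map f = s := by
  induction s using Quotient.inductionOn with
  | _ l => exact ⟨l.get, (Fin.univ_val_map l.get).trans (congrArg _ (List.ofFn_get l))⟩

theorem exists_eq_C_mul_prod_X_sub_C {K : Type*} [Field K] {p : Polynomial K} (hp : p.Splits) :
    ∃ r : Fin p.natDegree → K,
      p = Polynomial.C p.leadingCoeff * ∏ l, (Polynomial.X - Polynomial.C (r l)) := by
  obtain ⟨r, hr⟩ := exists_map_univ_val_eq p.roots
  rw [hp.natDegree_eq_card_roots]
  refine ⟨r, ?_⟩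
  conv_lhs => rw [hp.eq_prod_roots, ← hr, Multiset.map_map]
  rfl

theorem homogenize_prod_X_sub_C {ι R : Type*} [Fintype ι] [CommRing R] (r : ι → R) :
    (∏ l, (Polynomial.X - Polynomial.C (r l))).homogenize (Fintype.card ι) =
      ∏ l, (X 0 - C (r l) * X 1) := by
  have hcard : Fintype.card ι = ∑ _ : ι, 1 := by simp
  rw [hcard, Polynomial.homogenize_finsetProd (n := fun _ ↦ 1)
    fun l _ ↦ Polynomial.natDegree_X_sub_C_le (r l)]
  simp

theorem exists_homogenize_natDegree_eq_prod {K : Type*} [Field K] {p : Polynomial K}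
    (hp : p.Splits) (hp0 : p.coeff 0 ≠ 0) :
    ∃ r : Fin p.natDegree → K, (∀ l, r l ≠ 0) ∧
      p.homogenize p.natDegree = C p.leadingCoeff * ∏ l, (X 0 - C (r l) * X 1) := by
  obtain ⟨r, hr⟩ := exists_eq_C_mul_prod_X_sub_C hp
  refine ⟨r, fun l hl ↦ hp0 ?_, ?_⟩
  · rw [hr, Polynomial.coeff_zero_eq_eval_zero, Polynomial.eval_mul, Polynomial.eval_prod,
      Finset.prod_eq_zero (Finset.mem_univ l) (by simp [hl]), mul_zero]
  · have hprod := homogenize_prod_X_sub_C r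
    rw [Fintype.card_fin] at hprod
    rw [congrArg (Polynomial.homogenize · p.natDegree) hr, Polynomial.homogenize_C_mul, hprod]

end BinaryForms

section NewtonSegment

/-- The exponent of the monomial `z₁^(m + b (k - s)) z₂^(n + a s)`. As `s` runs from `0` to `k`,
these are consecutive lattice points on a line `a i + b j = d` with `gcd(a, b) = 1`, the exponents
available to a quasihomogeneous polynomial of type `(a, b)`. The subtraction is truncated, so only
`s ≤ k` is meaningful. -/
noncomputable def segmentExponent (a b m n k s : ℕ) : Fin 2 →₀ ℕ :=
  Finsupp.single 0 (m + b * (k - s)) + Finsupp.single 1 (n + a * s)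

theorem segmentExponent_injective {a : ℕ} (ha : a ≠ 0) (b m n k : ℕ) :
    Function.Injective (segmentExponent a b m n k) := by
  intro s s' h
  simpa [segmentExponent, ha] using DFunLike.congr_fun h 1

theorem monomial_segmentExponent {R : Type*} [CommSemiring R] (a b m n k s : ℕ) (c : R) :
    monomial (segmentExponent a b m n k s) c =
      X 0 ^ m * X 1 ^ n * (C c * ((X 1 ^ a) ^ s * (X 0 ^ b) ^ (k - s))) := by
  simp only [segmentExponent, monomial_eq, Finsupp.prod_fintype, pow_zero, implies_true,
    Fin.prod_univ_two, Finsupp.add_apply, Finsupp.single_apply]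
  simp only [if_true, one_ne_zero, zero_ne_one, if_false, add_zero, zero_add]
  ring

theorem exists_eq_add_mul_of_coprime {a b i j i' j' : ℕ} (hb : b ≠ 0) (hab : a.Coprime b)
    (h : a * i + b * j = a * i' + b * j') (hi : i ≤ i') :
    ∃ t, i' = i + b * t ∧ j = j' + a * t := by
  obtain ⟨x, rfl⟩ := Nat.exists_eq_add_of_le hi
  have hx : b * j = a * x + b * j' := by linarith
  have hbx : b ∣ x := hab.symm.dvd_of_dvd_mul_left <|
    (Nat.dvd_add_left (dvd_mul_right b j')).mp (hx ▸ dvd_mul_right b j)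
  obtain ⟨t, rfl⟩ := hbx
  refine ⟨t, rfl, Nat.eq_of_mul_eq_mul_left (Nat.pos_of_ne_zero hb) ?_⟩
  linarith

variable {R : Type*} [CommSemiring R] {a b d : ℕ} {Q : MvPolynomial (Fin 2) R}

theorem isWeightedHomogeneous_fin_two_iff_s10 :
    IsWeightedHomogeneous ![a, b] Q d ↔ ∀ e ∈ Q.support, a * e 0 + b * e 1 = d := by
  simp [IsWeightedHomogeneous, Finsupp.weight_eq_sum, mul_comm]

theorem exists_support_subset_segment (ha : a ≠ 0) (hb : b ≠ 0) (hab : a.Coprime b) (hQ0 : Q ≠ 0)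
    (hQ : IsWeightedHomogeneous ![a, b] Q d) :
    ∃ m n k, coeff (segmentExponent a b m n k 0) Q ≠ 0 ∧
      coeff (segmentExponent a b m n k k) Q ≠ 0 ∧
      ∀ e ∈ Q.support, ∃ s ≤ k, segmentExponent a b m n k s = e := by
  rw [isWeightedHomogeneous_fin_two_iff_s10] at hQ
  have hne : Q.support.Nonempty := support_nonempty.mpr hQ0
  obtain ⟨e, he, he_min⟩ := Q.support.exists_min_image (fun e ↦ e 0) hne
  obtain ⟨f, hf, hf_min⟩ := Q.support.exists_min_image (fun e ↦ e 1) hne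
  have from_e : ∀ g ∈ Q.support, ∃ t, g 0 = e 0 + b * t ∧ e 1 = g 1 + a * t := fun g hg ↦
    exists_eq_add_mul_of_coprime hb hab ((hQ e he).trans (hQ g hg).symm) (he_min g hg)
  have from_f : ∀ g ∈ Q.support, ∃ s, g 1 = f 1 + a * s ∧ f 0 = g 0 + b * s := fun g hg ↦
    exists_eq_add_mul_of_coprime ha hab.symm (by linarith [hQ f hf, hQ g hg]) (hf_min g hg)
  obtain ⟨k, hfk, hek⟩ := from_e f hf
  have on_segment : ∀ g ∈ Q.support, ∃ s ≤ k, segmentExponent a b (e 0) (f 1) k s = g := by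
    intro g hg
    obtain ⟨t, hgt, -⟩ := from_e g hg
    obtain ⟨s, hgs, hfs⟩ := from_f g hg
    obtain rfl : k = t + s :=
      Nat.eq_of_mul_eq_mul_left (Nat.pos_of_ne_zero hb) (by linarith)
    refine ⟨s, Nat.le_add_left s t, ?_⟩
    ext i
    fin_cases i <;> simp [segmentExponent, hgt, hgs]
  have hf_eq : segmentExponent a b (e 0) (f 1) k 0 = f := by
    ext i
    fin_cases i <;> simp [segmentExponent, hfk]
  have he_eq : segmentExponent a b (e 0) (f 1) k k = e := by
    ext i
    fin_cases i <;> simp [segmentExponent, hek]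
  exact ⟨e 0, f 1, k, by rwa [hf_eq, ← mem_support_iff], by rwa [he_eq, ← mem_support_iff],
    on_segment⟩

theorem eq_sum_monomial_of_support_subset_image {ι σ : Type*} {P : MvPolynomial σ R}
    {S : Finset ι} {g : ι → σ →₀ ℕ} (hg : Function.Injective g)
    (hP : ∀ e ∈ P.support, ∃ s ∈ S, g s = e) : P = ∑ s ∈ S, monomial (g s) (coeff (g s) P) := by
  classical
  have hsub : P.support ⊆ S.image g := fun e he ↦ Finset.mem_image.mpr (hP e he)
  conv_lhs => rw [P.as_sum]
  rw [Finset.sum_subset hsub fun e _ he ↦ by rw [notMem_support_iff.mp he, monomial_zero],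
    Finset.sum_image hg.injOn]

theorem aeval_homogenize_sum_monomial {A : Type*} [CommSemiring A] [Algebra R A] (c : ℕ → R)
    (k : ℕ) (u v : A) :
    aeval ![u, v] ((∑ s ∈ Finset.range (k + 1), Polynomial.monomial s (c s)).homogenize k) =
      ∑ s ∈ Finset.range (k + 1), algebraMap R A (c s) * (u ^ s * v ^ (k - s)) := by
  rw [Polynomial.homogenize_finsetSum, map_sum]
  refine Finset.sum_congr rfl fun s hs ↦ ?_
  rw [Polynomial.homogenize_monomial (Finset.mem_range_succ_iff.mp hs), aeval_monomial]
  simp [Finsupp.prod_fintype]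

theorem exists_eq_monomial_mul_aeval_homogenize (ha : a ≠ 0) (hb : b ≠ 0) (hab : a.Coprime b)
    (hQ0 : Q ≠ 0) (hQ : IsWeightedHomogeneous ![a, b] Q d) :
    ∃ (m n : ℕ) (p : Polynomial R), p.coeff 0 ≠ 0 ∧
      Q = X 0 ^ m * X 1 ^ n * aeval ![X 1 ^ a, X 0 ^ b] (p.homogenize p.natDegree) := by
  obtain ⟨m, n, k, hfirst, hlast, hsegment⟩ := exists_support_subset_segment ha hb hab hQ0 hQ
  let c s := coeff (segmentExponent a b m n k s) Q
  let p := ∑ s ∈ Finset.range (k + 1), Polynomial.monomial s (c s)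
  have hcoeff : ∀ s ≤ k, p.coeff s = c s := fun s hs ↦ by
    simp [p, Polynomial.finsetSum_coeff, Polynomial.coeff_monomial, hs]
  have hdegree : p.natDegree = k :=
    Polynomial.natDegree_eq_of_le_of_coeff_ne_zero
      (Polynomial.natDegree_sum_le_of_forall_le _ _ fun s hs ↦
        (Polynomial.natDegree_monomial_le _).trans (Finset.mem_range_succ_iff.mp hs))
      (by rwa [hcoeff k le_rfl])
  refine ⟨m, n, p, by rwa [hcoeff 0 k.zero_le], ?_⟩
  calc Q = ∑ s ∈ Finset.range (k + 1), monomial (segmentExponent a b m n k s) (c s) :=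
        eq_sum_monomial_of_support_subset_image (segmentExponent_injective ha b m n k)
          (by simpa [Nat.lt_succ_iff] using hsegment)
    _ = X 0 ^ m * X 1 ^ n * aeval ![X 1 ^ a, X 0 ^ b] (p.homogenize p.natDegree) := by
        simp only [hdegree, p, aeval_homogenize_sum_monomial, Finset.mul_sum,
          monomial_segmentExponent, algebraMap_eq]

end NewtonSegment

section Factorization

variable {K : Type*} [Field K] [IsAlgClosed K] {a b d : ℕ} {Q : MvPolynomial (Fin 2) K}

theorem exists_saito_factorization (ha : a ≠ 0) (hb : b ≠ 0) (hab : a.Coprime b) (hQ0 : Q ≠ 0)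
    (hQ : IsWeightedHomogeneous ![a, b] Q d) :
    ∃ (m n k : ℕ) (μ : K) (lam : Fin k → K), μ ≠ 0 ∧ (∀ ℓ, lam ℓ ≠ 0) ∧
      Q = C μ * X 0 ^ m * X 1 ^ n * ∏ ℓ, (X 1 ^ a - C (lam ℓ) * X 0 ^ b) := by
  obtain ⟨m, n, p, hp0, rfl⟩ := exists_eq_monomial_mul_aeval_homogenize ha hb hab hQ0 hQ
  obtain ⟨lam, hlam, hp⟩ := exists_homogenize_natDegree_eq_prod (IsAlgClosed.splits p) hp0
  have hlead : p.leadingCoeff ≠ 0 := by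
    rw [Polynomial.leadingCoeff_ne_zero]
    rintro rfl
    exact hp0 (Polynomial.coeff_zero 0)
  refine ⟨m, n, p.natDegree, p.leadingCoeff, lam, hlead, hlam, ?_⟩
  simp only [hp, map_mul, map_prod, map_sub, aeval_X, aeval_C, algebraMap_eq,
    Matrix.cons_val_zero, Matrix.cons_val_one]
  ring

variable [TopologicalSpace K] [ContinuousMul K] [(𝓝[≠] (0 : K)).NeBot]

theorem not_X_pow_sub_C_mul_X_pow_sq_dvd (ha : a ≠ 0) (hb : b ≠ 0)
    (hQ : ∀ᶠ z in 𝓝 0, (∀ i, eval z (pderiv i Q) = 0) → z = 0) (x : K) :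
    ¬ (X 1 ^ a - C x * X 0 ^ b) ^ 2 ∣ Q := by
  -- With `γ ^ a = x`, the curve `t ↦ (t ^ a, γ t ^ b)` is a branch of `z₂ ^ a = x z₁ ^ b`.
  obtain ⟨γ, rfl⟩ := IsAlgClosed.exists_pow_nat_eq x (Nat.pos_of_ne_zero ha)
  refine not_sq_dvd_of_forall_eval_weightedCurve_eq_zero hQ (w := ![a, b]) (c := ![1, γ])
    (by simp [Fin.forall_fin_two, ha, hb]) (by simp) fun t ↦ ?_
  simp only [map_sub, map_mul, map_pow, eval_X, eval_C, Matrix.cons_val_zero, Matrix.cons_val_one]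
  ring

theorem stmt_10_general (ha : a ≠ 0) (hb : b ≠ 0) (hab : a.Coprime b)
    (hQ : IsWeightedHomogeneous ![a, b] Q d)
    (hQsing : ∀ᶠ z in 𝓝 (0 : Fin 2 → K), (∀ i, eval z (pderiv i Q) = 0) → z = 0) :
    ∃ (m n k : ℕ) (μ : K) (lam : Fin k → K),
      m ≤ 1 ∧ n ≤ 1 ∧ μ ≠ 0 ∧ (∀ ℓ, lam ℓ ≠ 0) ∧ Function.Injective lam ∧
      Q = C μ * X 0 ^ m * X 1 ^ n * ∏ ℓ, (X 1 ^ a - C (lam ℓ) * X 0 ^ b) := by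
  have hQ0 : Q ≠ 0 := by
    rintro rfl
    exact not_X_sq_dvd hQsing 0 (dvd_zero _)
  obtain ⟨m, n, k, μ, lam, hμ, hlam, hfac⟩ := exists_saito_factorization ha hb hab hQ0 hQ
  refine ⟨m, n, k, μ, lam, ?_, ?_, hμ, hlam, fun ℓ ℓ' hℓ ↦ ?_, hfac⟩
  · by_contra! hm
    refine not_X_sq_dvd hQsing 0 ?_
    exact hfac ▸ (((pow_dvd_pow _ hm).mul_left _).mul_right _).mul_right _
  · by_contra! hn
    refine not_X_sq_dvd hQsing 1 ?_
    exact hfac ▸ ((pow_dvd_pow _ hn).mul_left _).mul_right _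
  · by_contra hne
    refine not_X_pow_sub_C_mul_X_pow_sq_dvd ha hb hQsing (lam ℓ) ?_
    let F (ℓ : Fin k) : MvPolynomial (Fin 2) K := X 1 ^ a - C (lam ℓ) * X 0 ^ b
    have hF : F ℓ = F ℓ' := by simp only [F, hℓ]
    exact hfac ▸ (sq_dvd_prod_of_ne_of_eq hne hF).mul_left _

end Factorization

/-- A quasihomogeneous polynomial `Q` of type `(a,b)`, `gcd(a,b) = 1`, with an isolated
singularity at `0 ∈ ℂ²` factors as `Q = μ z₁^m z₂^n Π_{ℓ=1}^k (z₂^a − λ_ℓ z₁^b)` with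
`m ≤ 1`, `n ≤ 1`, `μ ∈ ℂ*` and the `λ_ℓ ∈ ℂ*` pairwise distinct; in particular, in the
Saito factorization of `Q` the exponents are `p = a` and `q = b`. -/
theorem stmt_10 (a b d : ℕ) (ha : 0 < a) (hb : 0 < b) (hab : Nat.gcd a b = 1)
    (Q : MvPolynomial (Fin 2) ℂ) (hQ : Q ≠ 0)
    -- `Q` is quasihomogeneous of type `(a,b)` and quasihomogeneous degree `d`
    (hqh : ∀ m ∈ Q.support, a * m 0 + b * m 1 = d)
    -- `Q` has an isolated singularity at `0 ∈ ℂ²`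
    (hQcrit : ∀ i, eval (0 : Fin 2 → ℂ) (pderiv i Q) = 0)
    (hQsing : ∀ᶠ z in 𝓝 (0 : Fin 2 → ℂ), (∀ i, eval z (pderiv i Q) = 0) → z = 0) :
    ∃ (m n k : ℕ) (μ : ℂ) (lam : Fin k → ℂ),
      m ≤ 1 ∧ n ≤ 1 ∧ μ ≠ 0 ∧ (∀ ℓ, lam ℓ ≠ 0) ∧ Function.Injective lam ∧
      ∀ z : Fin 2 → ℂ,
        eval z Q = μ * z 0 ^ m * z 1 ^ n * ∏ ℓ, (z 1 ^ a - lam ℓ * z 0 ^ b) := by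
  obtain ⟨m, n, k, μ, lam, hm, hn, hμ, hlam, hinj, hfac⟩ :=
    stmt_10_general ha.ne' hb.ne' hab (isWeightedHomogeneous_fin_two_iff_s10.mpr hqh) hQsing
  exact ⟨m, n, k, μ, lam, hm, hn, hμ, hlam, hinj, fun z ↦ by simp [hfac, map_prod]⟩
end
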